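/- arXiv:math/0608252 — 2 statements merged into one kernel-verified Lean document; each statement's English description precedes it below -/
import Mathlib

section
/- Let P and Q be irreducible aperiodic stochastic matrices on finite state sets. If the mixing Markov shifts determined by P and Q are finitarily isomorphic with finite expected code times, then β_P(t) = β_Q(t) for every t ∈ ℝ. -/
open MeasureTheory ENNReal Filter

noncomputable section

/-- The left shift transformation on bi-infinite sequences: `(shift x) n = x (n+1)`. -/
def shift {A : Type*} : (ℤ → A) → (ℤ → A) := fun x n => x (n + 1)

/-- `φ` is a homomorphism (factor map) from the shift system `(ℤ → A, μ, shift)` to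
`(ℤ → B, ν, shift)`, defined on the shift-invariant full-measure domain `D`. -/
structure IsFactorMap {A B : Type*} [MeasurableSpace A] [MeasurableSpace B]
    (μ : Measure (ℤ → A)) (ν : Measure (ℤ → B))
    (D : Set (ℤ → A)) (φ : (ℤ → A) → (ℤ → B)) : Prop where
  measurable_map : Measurable φ
  dom_measurable : MeasurableSet D
  dom_shift_invariant : shift ⁻¹' D = D
  dom_full : μ D = 1
  pushforward : ν = μ.map φ
  equivariant : ∀ x ∈ D, φ (shift x) = shift (φ x)

/-- The window `[-q, r]` of `x` determines the zero coordinate of the image under `φ`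
(among points of the domain `D`). -/
def DeterminesAt {A B : Type*} (D : Set (ℤ → A)) (φ : (ℤ → A) → (ℤ → B))
    (q r : ℕ) (x : ℤ → A) : Prop :=
  ∀ y ∈ D, (∀ i : ℤ, -(q : ℤ) ≤ i → i ≤ (r : ℤ) → y i = x i) → φ y 0 = φ x 0

/-- A homomorphism `φ` with domain `D` is finitary if for almost every `x` in the domain
there are nonnegative integers `q`, `r` such that the coordinates `x_{-q}, …, x_r`
determine `(φ x)_0`. -/
def IsFinitary {A B : Type*} [MeasurableSpace A] [MeasurableSpace B]
    (μ : Measure (ℤ → A)) (D : Set (ℤ → A)) (φ : (ℤ → A) → (ℤ → B)) : Prop :=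
  ∀ᵐ x ∂μ, x ∈ D → ∃ q r : ℕ, DeterminesAt D φ q r x

/-- The code length `C(x) = q(x) + r(x)` with `q(x), r(x)` minimal such that the window
`[-q(x), r(x)]` determines the zero output coordinate (`⊤` if no finite window works). -/
def codeLength {A B : Type*} (D : Set (ℤ → A)) (φ : (ℤ → A) → (ℤ → B))
    (x : ℤ → A) : ℝ≥0∞ :=
  ⨅ (q : ℕ) (r : ℕ) (_ : DeterminesAt D φ q r x), ((q : ℝ≥0∞) + (r : ℝ≥0∞))

/-- `μ` is the Bernoulli (product) measure on `(ℤ → A)` given by the probability vector `p`. -/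
def IsBernoulliMeasure {A : Type*} [MeasurableSpace A] (μ : Measure (ℤ → A)) (p : A → ℝ) : Prop :=
  ∀ (F : Finset ℤ) (s : ℤ → A),
    μ {x | ∀ i ∈ F, x i = s i} = ENNReal.ofReal (∏ i ∈ F, p (s i))

/-- A strictly positive probability vector on a finite alphabet. -/
def IsProbVector {A : Type*} [Fintype A] (p : A → ℝ) : Prop :=
  (∀ i, 0 < p i) ∧ ∑ i, p i = 1

/-- The entropy `H(p) = -∑ p_i log p_i` of a probability vector. -/
def vecEntropy {A : Type*} [Fintype A] (p : A → ℝ) : ℝ := -∑ i, p i * Real.log (p i)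

/-- A finitary isomorphism: a pair of mutually inverse finitary factor maps. -/
def IsFinitaryIsomorphism {A B : Type*} [MeasurableSpace A] [MeasurableSpace B]
    (μ : Measure (ℤ → A)) (ν : Measure (ℤ → B))
    (D : Set (ℤ → A)) (E : Set (ℤ → B))
    (φ : (ℤ → A) → (ℤ → B)) (ψ : (ℤ → B) → (ℤ → A)) : Prop :=
  IsFactorMap μ ν D φ ∧ IsFactorMap ν μ E ψ ∧
  IsFinitary μ D φ ∧ IsFinitary ν E ψ ∧
  (∀ x ∈ D, φ x ∈ E ∧ ψ (φ x) = x) ∧ (∀ y ∈ E, ψ y ∈ D ∧ φ (ψ y) = y)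

/-- A stochastic matrix: nonnegative entries, rows summing to one. -/
def IsStochastic {S : Type*} [Fintype S] (P : Matrix S S ℝ) : Prop :=
  (∀ i j, 0 ≤ P i j) ∧ ∀ i, ∑ j, P i j = 1

/-- Irreducible and aperiodic (primitive): some power has all entries strictly positive. -/
def IsPrimitive {S : Type*} [Fintype S] [DecidableEq S] (P : Matrix S S ℝ) : Prop :=
  ∃ n : ℕ, ∀ i j, 0 < (P ^ n) i j

/-- Irreducible: every state leads to every state in some positive number of steps. -/
def IsIrreducibleMat {S : Type*} [Fintype S] [DecidableEq S] (P : Matrix S S ℝ) : Prop :=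
  ∀ i j, ∃ n : ℕ, 0 < n ∧ 0 < (P ^ n) i j

/-- A stationary probability vector for `P`. -/
def IsStationaryVector {S : Type*} [Fintype S] (P : Matrix S S ℝ) (ppi : S → ℝ) : Prop :=
  (∀ i, 0 ≤ ppi i) ∧ (∑ i, ppi i = 1) ∧ ∀ j, ∑ i, ppi i * P i j = ppi j

/-- `μ` is the (stationary) Markov measure on `(ℤ → S)` determined by the stochastic
matrix `P` with stationary vector `ppi`. -/
def IsMarkovMeasure {S : Type*} [Fintype S] [MeasurableSpace S]
    (μ : Measure (ℤ → S)) (P : Matrix S S ℝ) (ppi : S → ℝ) : Prop :=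
  ∀ (m n : ℤ), m ≤ n → ∀ w : ℤ → S,
    μ {x | ∀ i : ℤ, m ≤ i → i ≤ n → x i = w i} =
      ENNReal.ofReal (ppi (w m) * ∏ i ∈ Finset.Ico m n, P (w i) (w (i + 1)))

/-- The entropy `h(P) = -∑_{i,j} π_i P(i,j) log P(i,j)` of the Markov shift of `P`. -/
def markovEntropy {S : Type*} [Fintype S] (P : Matrix S S ℝ) (ppi : S → ℝ) : ℝ :=
  -∑ i, ∑ j, ppi i * P i j * Real.log (P i j)

/-- The weight `P(c_0,c_1) ⋯ P(c_{n-1},c_n)` of the path `c_0, …, c_n` in `P`. -/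
def cycleWeight {S : Type*} (P : Matrix S S ℝ) (n : ℕ) (c : ℕ → S) : ℝ :=
  ∏ i ∈ Finset.range n, P (c i) (c (i + 1))

/-- `c` describes a cycle of length `n`: it returns to its starting state. -/
def IsCycle {S : Type*} (n : ℕ) (c : ℕ → S) : Prop := c n = c 0

/-- Krieger's Δ-group: the multiplicative subgroup of the positive reals (inside `ℝˣ`)
generated by ratios of strictly positive weights of two cycles of the same length through
the same state. -/
def DeltaGroup {S : Type*} (P : Matrix S S ℝ) : Subgroup ℝˣ :=
  Subgroup.closure {u : ℝˣ | ∃ (n : ℕ) (c d : ℕ → S), 0 < n ∧ IsCycle n c ∧ IsCycle n d ∧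
    c 0 = d 0 ∧ 0 < cycleWeight P n c ∧ 0 < cycleWeight P n d ∧
    (u : ℝ) = cycleWeight P n c / cycleWeight P n d}

/-- The Γ-group of Parry–Schmidt: the multiplicative subgroup of the positive reals (inside
`ℝˣ`) generated by all strictly positive cycle weights. -/
def GammaGroup {S : Type*} (P : Matrix S S ℝ) : Subgroup ℝˣ :=
  Subgroup.closure {u : ℝˣ | ∃ (n : ℕ) (c : ℕ → S), 0 < n ∧ IsCycle n c ∧
    0 < cycleWeight P n c ∧ (u : ℝ) = cycleWeight P n c}

/-- The matrix `P^{(t)}` with entries `P(i,j)^t` where `P(i,j) > 0`, and `0` elsewhere,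
viewed as a complex matrix. -/
def betaMatrix {S : Type*} (P : Matrix S S ℝ) (t : ℝ) : Matrix S S ℂ :=
  Matrix.of fun i j => if 0 < P i j then ((P i j ^ t : ℝ) : ℂ) else 0

/-- Tuncel's β-function: `β_P(t)` is the spectral radius of `P^{(t)}`. -/
def betaFunction {S : Type*} [Fintype S] [DecidableEq S] (P : Matrix S S ℝ) (t : ℝ) : ℝ≥0∞ :=
  spectralRadius ℂ (betaMatrix P t)

/-- Two shift systems are finitarily isomorphic with finite expected code times (fect):
there is a finitary isomorphism such that the code lengths of the map and of its inverse
both have finite expectation. -/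
def FinitarilyIsomorphicFect {A B : Type*} [MeasurableSpace A] [MeasurableSpace B]
    (μ : Measure (ℤ → A)) (ν : Measure (ℤ → B)) : Prop :=
  ∃ (D : Set (ℤ → A)) (E : Set (ℤ → B)) (φ : (ℤ → A) → (ℤ → B)) (ψ : (ℤ → B) → (ℤ → A)),
    IsFinitaryIsomorphism μ ν D E φ ψ ∧
    (∫⁻ x, codeLength D φ x ∂μ) < ⊤ ∧ (∫⁻ y, codeLength E ψ y ∂ν) < ⊤

/-- The shift by `j` coordinates. -/
def shiftBy {A : Type*} (j : ℤ) (x : ℤ → A) : ℤ → A := fun i => x (i + j)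

/-- The cylinder of sequences agreeing with `w` on the window `[a, b]`. -/
def cyl {A : Type*} (a b : ℤ) (w : ℤ → A) : Set (ℤ → A) := {x | ∀ i, a ≤ i → i ≤ b → x i = w i}

open Classical in
/-- Replace the coordinates of `x` in the window `[a, b]` by those of `w`. -/
def splice {A : Type*} (a b : ℤ) (w x : ℤ → A) : ℤ → A :=
  fun i => if a ≤ i ∧ i ≤ b then w i else x i

/-- The weight of the path read by `x` along the window `[a, b]`. -/
def pathWeight {S : Type*} (P : Matrix S S ℝ) (a b : ℤ) (x : ℤ → S) : ℝ :=
  ∏ i ∈ Finset.Ico a b, P (x i) (x (i + 1))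

section Sequences

variable {A : Type*}

lemma splice_of_mem {a b : ℤ} {w x : ℤ → A} {i : ℤ} (h₁ : a ≤ i) (h₂ : i ≤ b) :
    splice a b w x i = w i := by simp [splice, h₁, h₂]

lemma splice_of_lt {a b : ℤ} {w x : ℤ → A} {i : ℤ} (h : i < a) :
    splice a b w x i = x i := by simp [splice, h]

lemma splice_of_gt {a b : ℤ} {w x : ℤ → A} {i : ℤ} (h : b < i) :
    splice a b w x i = x i := by simp [splice, h]

lemma splice_mem_cyl (a b : ℤ) (w x : ℤ → A) : splice a b w x ∈ cyl a b w :=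
  fun _ h₁ h₂ => splice_of_mem h₁ h₂

lemma splice_splice (a b : ℤ) (w u x : ℤ → A) :
    splice a b w (splice a b u x) = splice a b w x := by
  funext i
  simp only [splice]
  split_ifs <;> rfl

lemma splice_eq_self {a b : ℤ} {w x : ℤ → A} (h : x ∈ cyl a b w) : splice a b w x = x := by
  funext i
  simp only [splice]
  split_ifs with hi
  · exact (h i hi.1 hi.2).symm
  · rfl

lemma splice_congr {a b : ℤ} {w w' : ℤ → A} (h : w ∈ cyl a b w') (x : ℤ → A) :
    splice a b w x = splice a b w' x := by
  funext i
  simp only [splice]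
  split_ifs with hi
  · exact h i hi.1 hi.2
  · rfl

lemma cyl_symm {a b : ℤ} {w w' : ℤ → A} (h : w ∈ cyl a b w') : w' ∈ cyl a b w :=
  fun i h₁ h₂ => (h i h₁ h₂).symm

lemma cyl_congr {a b : ℤ} {w w' : ℤ → A} (h : w ∈ cyl a b w') : cyl a b w = cyl a b w' := by
  ext x
  exact ⟨fun hx i h₁ h₂ => (hx i h₁ h₂).trans (h i h₁ h₂),
    fun hx i h₁ h₂ => (hx i h₁ h₂).trans (h i h₁ h₂).symm⟩

lemma pathWeight_congr {P : Matrix A A ℝ} {a b : ℤ} {w w' : ℤ → A} (h : w ∈ cyl a b w') :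
    pathWeight P a b w = pathWeight P a b w' := by
  refine Finset.prod_congr rfl fun i hi => ?_
  rw [Finset.mem_Ico] at hi
  rw [h i hi.1 hi.2.le, h (i + 1) (by omega) (by omega)]

lemma pathWeight_mul {P : Matrix A A ℝ} {a b c : ℤ} (hab : a ≤ b) (hbc : b ≤ c) (x : ℤ → A) :
    pathWeight P a b x * pathWeight P b c x = pathWeight P a c x := by
  unfold pathWeight
  rw [← Finset.prod_union (Finset.Ico_disjoint_Ico_consecutive a b c),
    Finset.Ico_union_Ico_eq_Ico hab hbc]

lemma exists_countable_words [Finite A] (a b : ℤ) :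
    ∃ T : Set (ℤ → A), T.Countable ∧ ∀ w, ∃ w' ∈ T, w' ∈ cyl a b w := by
  rcases isEmpty_or_nonempty A with hA | hA
  · exact ⟨∅, Set.countable_empty, fun w => (hA.false (w 0)).elim⟩
  · inhabit A
    refine ⟨Set.range fun (f : Finset.Icc a b → A) (i : ℤ) =>
      if h : i ∈ Finset.Icc a b then f ⟨i, h⟩ else default, Set.countable_range _, fun w => ?_⟩
    refine ⟨_, ⟨fun i => w i, rfl⟩, fun i h₁ h₂ => ?_⟩
    simp [h₁, h₂]

variable [MeasurableSpace A]

lemma measurable_shiftBy (j : ℤ) : Measurable (shiftBy j : (ℤ → A) → ℤ → A) :=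
  measurable_pi_lambda _ fun i => measurable_pi_apply (i + j)

lemma measurable_splice (a b : ℤ) (w : ℤ → A) : Measurable (splice a b w) := by
  refine measurable_pi_lambda _ fun i => ?_
  by_cases h : a ≤ i ∧ i ≤ b
  · simp only [splice, h]
    exact measurable_const
  · simp only [splice, h]
    exact measurable_pi_apply i

lemma measurableSet_cyl [DiscreteMeasurableSpace A] (a b : ℤ) (w : ℤ → A) :
    MeasurableSet (cyl a b w) := by
  have : cyl a b w = ⋂ i ∈ Set.Icc a b, (fun x : ℤ → A => x i) ⁻¹' {w i} := by
    ext x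
    simp [cyl]
  rw [this]
  exact MeasurableSet.biInter (Set.to_countable _) fun i _ =>
    measurable_pi_apply i (MeasurableSet.of_discrete)

/-- Two measures which are finite on cylinders and agree on all large central cylinders are
equal. -/
lemma measure_ext_of_cyl [Finite A] [DiscreteMeasurableSpace A] {μ ν : Measure (ℤ → A)}
    [IsFiniteMeasure μ] (k₀ : ℕ)
    (h : ∀ k : ℕ, k₀ ≤ k → ∀ w, μ (cyl (-k) k w) = ν (cyl (-k) k w)) : μ = ν := by
  obtain ⟨T, hT, hT'⟩ := exists_countable_words (A := A) (-k₀) k₀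
  refine Measure.ext_of_generateFrom_of_cover_subset
    (S := {s | ∃ k : ℕ, k₀ ≤ k ∧ ∃ w, s = cyl (-k) k w}) (T := (fun w => cyl (-k₀) k₀ w) '' T)
    ?_ ?_ ?_ (hT.image _) ?_ (fun _ _ => measure_ne_top _ _) ?_
  · refine le_antisymm ?_ ?_
    · rw [MeasurableSpace.pi]
      refine iSup_le fun i => ?_
      rintro _ ⟨s, -, rfl⟩
      obtain ⟨T', hc, hT'⟩ := exists_countable_words (A := A)
        (-((max k₀ i.natAbs : ℕ) : ℤ)) (max k₀ i.natAbs : ℕ)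
      have : (fun x : ℤ → A => x i) ⁻¹' s = ⋃ w ∈ {w ∈ T' | w i ∈ s},
          cyl (-((max k₀ i.natAbs : ℕ) : ℤ)) (max k₀ i.natAbs : ℕ) w := by
        ext x
        simp only [Set.mem_preimage, Set.mem_iUnion, exists_prop, Set.mem_ofPred_eq]
        constructor
        · intro hx
          obtain ⟨w, hw, hwx⟩ := hT' x
          refine ⟨w, ⟨hw, ?_⟩, cyl_symm hwx⟩
          rwa [hwx i (by omega) (by omega)]
        · rintro ⟨w, ⟨-, hw⟩, hx⟩
          rwa [hx i (by omega) (by omega)]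
      rw [this]
      exact MeasurableSet.biUnion (hc.mono fun _ h => h.1) fun w _ =>
        MeasurableSpace.measurableSet_generateFrom ⟨_, le_max_left _ _, w, rfl⟩
    · refine MeasurableSpace.generateFrom_le ?_
      rintro _ ⟨k, -, w, rfl⟩
      exact measurableSet_cyl _ _ _
  · rintro _ ⟨k, hk, w, rfl⟩ _ ⟨l, hl, v, rfl⟩ ⟨z, hz₁, hz₂⟩
    refine ⟨max k l, le_max_of_le_left hk, z, ?_⟩
    ext x
    constructor
    · rintro ⟨h₁, h₂⟩ i hi₁ hi₂
      rcases le_total k l with hkl | hkl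
      · rw [h₂ i (by omega) (by omega), hz₂ i (by omega) (by omega)]
      · rw [h₁ i (by omega) (by omega), hz₁ i (by omega) (by omega)]
    · intro hx
      exact ⟨fun i hi₁ hi₂ => (hx i (by omega) (by omega)).trans (hz₁ i hi₁ hi₂),
        fun i hi₁ hi₂ => (hx i (by omega) (by omega)).trans (hz₂ i hi₁ hi₂)⟩
  · rintro _ ⟨w, -, rfl⟩
    exact ⟨k₀, le_rfl, w, rfl⟩
  · refine Set.eq_univ_of_forall fun x => ?_
    obtain ⟨w, hw, hwx⟩ := hT' x
    exact ⟨_, ⟨w, hw, rfl⟩, cyl_symm hwx⟩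
  · rintro _ ⟨k, hk, w, rfl⟩
    exact h k hk w

lemma ae_of_forall_cyl [Finite A] {μ : Measure (ℤ → A)} (a b : ℤ) {p : (ℤ → A) → Prop}
    (h : ∀ w, ∀ᵐ x ∂μ, x ∈ cyl a b w → p x) : ∀ᵐ x ∂μ, p x := by
  obtain ⟨T, hT, hT'⟩ := exists_countable_words (A := A) a b
  filter_upwards [(ae_ball_iff hT).2 fun w _ => h w] with x hx
  obtain ⟨w, hw, hwx⟩ := hT' x
  exact hx w hw (cyl_symm hwx)

lemma ae_forall_splice [Finite A] {μ : Measure (ℤ → A)} (a b : ℤ)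
    {p : (ℤ → A) → (ℤ → A) → Prop}
    (h : ∀ u, ∀ᵐ x ∂μ, p (splice a b u x) x) : ∀ᵐ x ∂μ, ∀ u, p (splice a b u x) x := by
  obtain ⟨T, hT, hT'⟩ := exists_countable_words (A := A) a b
  filter_upwards [(ae_ball_iff hT).2 fun w _ => h w] with x hx u
  obtain ⟨w, hw, hwx⟩ := hT' u
  rw [← splice_congr hwx]
  exact hx w hw

end Sequences

section Markov

variable {S : Type*} [Fintype S] {P : Matrix S S ℝ}

lemma IsStochastic.pathWeight_nonneg (hP : IsStochastic P) (a b : ℤ) (x : ℤ → S) :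
    0 ≤ pathWeight P a b x :=
  Finset.prod_nonneg fun _ _ => hP.1 _ _

lemma pathWeight_window_lower_bound (hP : IsStochastic P) {δ : ℝ} (hδ0 : 0 < δ)
    (hδ : ∀ i j, 0 < P i j → δ ≤ P i j) {n N : ℕ} {x : ℤ → S}
    (hx : 0 < pathWeight P (-N) (n + N) x) :
    δ ^ (2 * N) * pathWeight P 0 n x ≤ pathWeight P (-N) (n + N) x := by
  have hside : ∀ a : ℤ, -(N : ℤ) ≤ a → a + N ≤ n + N → δ ^ N ≤ pathWeight P a (a + N) x := by
    intro a h₁ h₂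
    have hcard : δ ^ N = ∏ _i ∈ Finset.Ico a (a + N), δ := by simp
    rw [hcard]
    refine Finset.prod_le_prod (fun _ _ => hδ0.le) fun i hi => hδ _ _ ?_
    rw [Finset.mem_Ico] at hi
    exact (hP.1 _ _).lt_of_ne' (Finset.prod_ne_zero_iff.1 hx.ne' i
      (Finset.mem_Ico.2 ⟨by omega, by omega⟩))
  have h₁ := hside (-N) le_rfl (by omega)
  have h₂ := hside n (by omega) le_rfl
  rw [neg_add_cancel] at h₁
  rw [← pathWeight_mul (a := -(N : ℤ)) (b := 0) (c := n + N) (by omega) (by omega),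
    ← pathWeight_mul (a := 0) (b := n) (c := n + N) (by omega) (by omega)]
  have hnn := hP.pathWeight_nonneg 0 n x
  calc δ ^ (2 * N) * pathWeight P 0 n x = δ ^ N * (pathWeight P 0 n x * δ ^ N) := by ring
    _ ≤ _ := by
      have : 0 ≤ δ ^ N := by positivity
      gcongr
      exact this.trans h₁

variable [MeasurableSpace S] {ppi : S → ℝ} {μ : Measure (ℤ → S)}

lemma IsMarkovMeasure.measure_cyl (hμ : IsMarkovMeasure μ P ppi) {a b : ℤ} (hab : a ≤ b)
    (w : ℤ → S) : μ (cyl a b w) = ENNReal.ofReal (ppi (w a) * pathWeight P a b w) :=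
  hμ a b hab w

lemma IsMarkovMeasure.isFiniteMeasure (hμ : IsMarkovMeasure μ P ppi) : IsFiniteMeasure μ := by
  refine ⟨?_⟩
  have : (Set.univ : Set (ℤ → S)) = ⋃ s : S, cyl 0 0 (fun _ => s) := by
    refine (Set.eq_univ_of_forall fun x => ?_).symm
    refine Set.mem_iUnion.2 ⟨x 0, fun i h₁ h₂ => ?_⟩
    rw [le_antisymm h₂ h₁]
  rw [this]
  refine (measure_iUnion_fintype_le _ _).trans_lt (ENNReal.sum_lt_top.2 fun s _ => ?_)
  rw [hμ.measure_cyl le_rfl]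
  exact ENNReal.ofReal_lt_top

lemma IsMarkovMeasure.isProbabilityMeasure (hμ : IsMarkovMeasure μ P ppi)
    (hppi : IsStationaryVector P ppi) {D : Set (ℤ → S)} (hD : μ D = 1) :
    IsProbabilityMeasure μ := by
  refine ⟨le_antisymm ?_ (hD ▸ measure_mono (Set.subset_univ D))⟩
  have : (Set.univ : Set (ℤ → S)) = ⋃ s : S, cyl 0 0 (fun _ => s) := by
    refine (Set.eq_univ_of_forall fun x => ?_).symm
    refine Set.mem_iUnion.2 ⟨x 0, fun i h₁ h₂ => ?_⟩
    rw [le_antisymm h₂ h₁]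
  rw [this]
  refine (measure_iUnion_fintype_le _ _).trans ?_
  simp only [hμ.measure_cyl le_rfl, pathWeight, Finset.Ico_self, Finset.prod_empty, mul_one]
  rw [← ENNReal.ofReal_sum_of_nonneg fun i _ => hppi.1 i, hppi.2.1, ENNReal.ofReal_one]

lemma IsMarkovMeasure.ae_pathWeight_pos (hμ : IsMarkovMeasure μ P ppi) (hP : IsStochastic P)
    {a b : ℤ} (hab : a ≤ b) : ∀ᵐ x ∂μ, 0 < pathWeight P a b x := by
  refine ae_of_forall_cyl a b fun w => ?_
  by_cases hw : 0 < pathWeight P a b w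
  · refine .of_forall fun x hx => ?_
    rwa [pathWeight_congr hx]
  · have h0 : pathWeight P a b w = 0 := le_antisymm (not_lt.1 hw) (hP.pathWeight_nonneg a b w)
    have : μ (cyl a b w) = 0 := by rw [hμ.measure_cyl hab, h0]; simp
    filter_upwards [measure_eq_zero_iff_ae_notMem.1 this] with x hx h
    exact (hx h).elim

variable [DiscreteMeasurableSpace S]

lemma IsMarkovMeasure.map_shiftBy (hμ : IsMarkovMeasure μ P ppi) (j : ℤ) :
    μ.map (shiftBy j) = μ := by
  have := hμ.isFiniteMeasure
  refine measure_ext_of_cyl 0 fun k _ w => ?_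
  rw [Measure.map_apply (measurable_shiftBy j) (measurableSet_cyl _ _ _)]
  have : shiftBy j ⁻¹' cyl (-(k : ℤ)) k w = cyl (-(k : ℤ) + j) (k + j) (shiftBy (-j) w) := by
    ext x
    constructor
    · intro h i h₁ h₂
      have := h (i - j) (by omega) (by omega)
      simpa [shiftBy, sub_eq_add_neg] using this
    · intro h i h₁ h₂
      have := h (i + j) (by omega) (by omega)
      simpa [shiftBy] using this
  rw [this, hμ.measure_cyl (by omega), hμ.measure_cyl (by omega)]
  congr 2
  · simp [shiftBy]
  · unfold pathWeight
    rw [← Finset.map_add_right_Ico, Finset.prod_map]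
    refine Finset.prod_congr rfl fun i _ => ?_
    simp only [shiftBy, addRightEmbedding_apply]
    congr 2 <;> ring

/-- Splicing rescales the Markov measure by the ratio of the weights. -/
lemma IsMarkovMeasure.splice_measure (hμ : IsMarkovMeasure μ P ppi)
    (hP : IsStochastic P) {a b : ℤ} (hab : a ≤ b)
    {u w : ℤ → S} (ha : u a = w a) (hb : u b = w b) {B : Set (ℤ → S)} (hB : MeasurableSet B) :
    ENNReal.ofReal (pathWeight P a b u) * μ (splice a b u ⁻¹' B ∩ cyl a b w) =
      ENNReal.ofReal (pathWeight P a b w) * μ (B ∩ cyl a b u) := by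
  have := hμ.isFiniteMeasure
  have key : (ENNReal.ofReal (pathWeight P a b u)) • (μ.restrict (cyl a b w)).map (splice a b u) =
      (ENNReal.ofReal (pathWeight P a b w)) • μ.restrict (cyl a b u) := by
    have : IsFiniteMeasure ((ENNReal.ofReal (pathWeight P a b u)) •
        (μ.restrict (cyl a b w)).map (splice a b u)) :=
      Measure.smul_finite _ ENNReal.ofReal_ne_top
    refine measure_ext_of_cyl (a.natAbs + b.natAbs + 1) fun k hk v => ?_
    simp only [Measure.smul_apply, smul_eq_mul]
    rw [Measure.map_apply (measurable_splice _ _ _) (measurableSet_cyl _ _ _),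
      Measure.restrict_apply (measurable_splice _ _ _ (measurableSet_cyl _ _ _)),
      Measure.restrict_apply (measurableSet_cyl _ _ _)]
    by_cases hv : v ∈ cyl a b u
    · have h₁ : splice a b u ⁻¹' cyl (-(k : ℤ)) k v ∩ cyl a b w =
          cyl (-(k : ℤ)) k (splice a b w v) := by
        ext x
        constructor
        · rintro ⟨h₁, h₂⟩ i hi₁ hi₂
          by_cases h : a ≤ i ∧ i ≤ b
          · rw [splice_of_mem h.1 h.2, h₂ i h.1 h.2]
          · have := h₁ i hi₁ hi₂
            simpa [splice, h] using this
        · intro hx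
          refine ⟨fun i hi₁ hi₂ => ?_, fun i hi₁ hi₂ => ?_⟩
          · by_cases h : a ≤ i ∧ i ≤ b
            · rw [splice_of_mem h.1 h.2, hv i h.1 h.2]
            · have := hx i hi₁ hi₂
              simpa [splice, h] using this
          · rw [hx i (by omega) (by omega), splice_of_mem hi₁ hi₂]
      have h₂ : cyl (-(k : ℤ)) k v ∩ cyl a b u = cyl (-(k : ℤ)) k v := by
        refine Set.inter_eq_left.2 fun x hx i hi₁ hi₂ => ?_
        rw [hx i (by omega) (by omega), hv i hi₁ hi₂]
      rw [h₁, h₂, hμ.measure_cyl (by omega), hμ.measure_cyl (by omega),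
        ← ENNReal.ofReal_mul (hP.pathWeight_nonneg _ _ _), ← ENNReal.ofReal_mul (hP.pathWeight_nonneg _ _ _),
        splice_of_lt (by omega),
        ← pathWeight_mul (a := -(k : ℤ)) (b := a) (c := k) (by omega) (by omega) v,
        ← pathWeight_mul (a := a) (b := b) (c := k) (by omega) (by omega) v,
        ← pathWeight_mul (a := -(k : ℤ)) (b := a) (c := k) (by omega) (by omega)
          (splice a b w v),
        ← pathWeight_mul (a := a) (b := b) (c := k) (by omega) (by omega) (splice a b w v),
        pathWeight_congr (splice_mem_cyl a b w v), pathWeight_congr hv,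
        pathWeight_congr (P := P) (a := -(k : ℤ)) (b := a) (w := splice a b w v) (w' := v) ?_,
        pathWeight_congr (P := P) (a := b) (b := k) (w := splice a b w v) (w' := v) ?_]
      · congr 1
        ring
      · intro i hi₁ hi₂
        rcases hi₁.eq_or_lt with rfl | h
        · rw [splice_of_mem hab le_rfl, hv _ hab le_rfl, hb]
        · rw [splice_of_gt h]
      · intro i hi₁ hi₂
        rcases hi₂.eq_or_lt with rfl | h
        · rw [splice_of_mem le_rfl hab, hv _ le_rfl hab, ha]
        · rw [splice_of_lt h]
    · have h₁ : splice a b u ⁻¹' cyl (-(k : ℤ)) k v ∩ cyl a b w = ∅ := by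
        refine Set.eq_empty_of_forall_notMem fun x hx => hv fun i hi₁ hi₂ => ?_
        rw [← hx.1 i (by omega) (by omega), splice_of_mem hi₁ hi₂]
      have h₂ : cyl (-(k : ℤ)) k v ∩ cyl a b u = ∅ := by
        refine Set.eq_empty_of_forall_notMem fun x hx => hv fun i hi₁ hi₂ => ?_
        rw [← hx.1 i (by omega) (by omega), hx.2 i hi₁ hi₂]
      rw [h₁, h₂]
      simp
  have := congrArg (fun m : Measure (ℤ → S) => m B) key
  simpa only [Measure.smul_apply, smul_eq_mul, Measure.map_apply (measurable_splice a b u) hB,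
    Measure.restrict_apply (measurable_splice a b u hB), Measure.restrict_apply hB] using this

/-- Splicing a word of positive weight into almost every point stays in a set of full measure. -/
lemma IsMarkovMeasure.ae_splice_mem (hμ : IsMarkovMeasure μ P ppi) (hP : IsStochastic P)
    {D : Set (ℤ → S)} (hD : MeasurableSet D) (hD0 : μ Dᶜ = 0) {a b : ℤ} (hab : a ≤ b)
    (u : ℤ → S) (hu : 0 < pathWeight P a b u) :
    ∀ᵐ x ∂μ, u a = x a → u b = x b → splice a b u x ∈ D := by
  refine ae_of_forall_cyl a b fun w => ?_
  by_cases hw : u a = w a ∧ u b = w b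
  · have := hμ.splice_measure hP hab hw.1 hw.2 hD.compl
    rw [measure_mono_null Set.inter_subset_left hD0, mul_zero, mul_eq_zero,
      ENNReal.ofReal_eq_zero, or_iff_right (not_le.2 hu)] at this
    filter_upwards [measure_eq_zero_iff_ae_notMem.1 this] with x hx hxw _ _
    by_contra hne
    exact hx ⟨hne, hxw⟩
  · refine .of_forall fun x hx h₁ h₂ => (hw ⟨?_, ?_⟩).elim
    · rw [h₁, hx a le_rfl hab]
    · rw [h₂, hx b hab le_rfl]

end Markov

/-- The real matrix `P^{(t)}`. -/
def powerMatrix {S : Type*} (P : Matrix S S ℝ) (t : ℝ) : Matrix S S ℝ :=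
  Matrix.of fun i j => if 0 < P i j then P i j ^ t else 0

section Matrices

variable {S : Type*}

lemma powerMatrix_nonneg (P : Matrix S S ℝ) (t : ℝ) (i j : S) : 0 ≤ powerMatrix P t i j := by
  simp only [powerMatrix, Matrix.of_apply]
  split_ifs with h
  · exact (Real.rpow_pos_of_pos h t).le
  · exact le_rfl

lemma prod_powerMatrix {ι : Type*} {P : Matrix S S ℝ} (hP : ∀ i j, 0 ≤ P i j) (t : ℝ)
    (s : Finset ι) (f g : ι → S) :
    ∏ k ∈ s, powerMatrix P t (f k) (g k) =
      if 0 < ∏ k ∈ s, P (f k) (g k) then (∏ k ∈ s, P (f k) (g k)) ^ t else 0 := by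
  split_ifs with h
  · have hpos : ∀ k ∈ s, 0 < P (f k) (g k) := fun k hk =>
      (hP _ _).lt_of_ne' (Finset.prod_ne_zero_iff.1 h.ne' k hk)
    rw [← Real.finsetProd_rpow _ _ fun k _ => hP _ _]
    refine Finset.prod_congr rfl fun k hk => ?_
    simp [powerMatrix, hpos k hk]
  · have h0 : ∏ k ∈ s, P (f k) (g k) = 0 :=
      le_antisymm (not_lt.1 h) (Finset.prod_nonneg fun _ _ => hP _ _)
    obtain ⟨k, hk, hk0⟩ := Finset.prod_eq_zero_iff.1 h0
    exact Finset.prod_eq_zero hk (by simp [powerMatrix, hk0])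

lemma powerMatrix_one {P : Matrix S S ℝ} (hP : ∀ i j, 0 ≤ P i j) : powerMatrix P 1 = P := by
  ext i j
  simp only [powerMatrix, Matrix.of_apply, Real.rpow_one]
  split_ifs with h
  · rfl
  · exact le_antisymm (hP i j) (not_lt.1 h)

variable [Fintype S]

lemma exists_pos_le_of_pos (P : Matrix S S ℝ) :
    ∃ δ : ℝ, 0 < δ ∧ ∀ i j, 0 < P i j → δ ≤ P i j := by
  classical
  let s : Finset ℝ := insert 1 ((Finset.univ.image fun ij : S × S => P ij.1 ij.2).filter (0 < ·))
  have hs : s.Nonempty := Finset.insert_nonempty _ _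
  refine ⟨s.min' hs, ?_, fun i j hij => Finset.min'_le _ _ ?_⟩
  · rw [Finset.lt_min'_iff]
    intro y hy
    rcases Finset.mem_insert.1 hy with rfl | hy
    · exact one_pos
    · exact (Finset.mem_filter.1 hy).2
  · exact Finset.mem_insert_of_mem
      (Finset.mem_filter.2 ⟨Finset.mem_image.2 ⟨(i, j), Finset.mem_univ _, rfl⟩, hij⟩)

lemma IsStochastic.apply_le_one {P : Matrix S S ℝ} (hP : IsStochastic P) (i j : S) :
    P i j ≤ 1 := by
  rw [← hP.2 i]
  exact Finset.single_le_sum (fun k _ => hP.1 i k) (Finset.mem_univ j)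

variable [DecidableEq S]

lemma matrix_pow_nonneg {A : Matrix S S ℝ} (hA : ∀ i j, 0 ≤ A i j) (n : ℕ) (i j : S) :
    0 ≤ (A ^ n) i j := by
  induction n generalizing j with
  | zero => simp only [pow_zero, Matrix.one_apply]; split_ifs <;> norm_num
  | succ n ih =>
    rw [pow_succ, Matrix.mul_apply]
    exact Finset.sum_nonneg fun k _ => mul_nonneg (ih k) (hA k j)

lemma pow_apply_pos_of_support {A B : Matrix S S ℝ} (hA : ∀ i j, 0 ≤ A i j)
    (hB : ∀ i j, 0 ≤ B i j) (h : ∀ i j, 0 < A i j → 0 < B i j) (n : ℕ) (i j : S)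
    (hn : 0 < (A ^ n) i j) : 0 < (B ^ n) i j := by
  induction n generalizing j with
  | zero => simpa using hn
  | succ n ih =>
    rw [pow_succ, Matrix.mul_apply] at hn ⊢
    obtain ⟨k, -, hk⟩ := (Finset.sum_pos_iff_of_nonneg fun k _ =>
      mul_nonneg (matrix_pow_nonneg hA n i k) (hA k j)).1 hn
    have h₁ : 0 < (A ^ n) i k := (matrix_pow_nonneg hA n i k).lt_of_ne' (left_ne_zero_of_mul hk.ne')
    have h₂ : 0 < A k j := (hA k j).lt_of_ne' (right_ne_zero_of_mul hk.ne')
    exact (Finset.sum_pos_iff_of_nonneg fun k _ =>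
      mul_nonneg (matrix_pow_nonneg hB n i k) (hB k j)).2
        ⟨k, Finset.mem_univ _, mul_pos (ih k h₁) (h k j h₂)⟩

/-- Matrix powers as sums over paths. -/
lemma matrix_pow_apply_eq_sum (A : Matrix S S ℝ) (n : ℕ) (i j : S) :
    (A ^ n) i j = ∑ p : Fin (n + 1) → S, if p 0 = i ∧ p (Fin.last n) = j then
      ∏ k : Fin n, A (p k.castSucc) (p k.succ) else 0 := by
  induction n generalizing i with
  | zero =>
    rw [Fintype.sum_equiv (Equiv.funUnique (Fin 1) S) _
      (fun s : S => if s = i ∧ s = j then (1 : ℝ) else 0) fun p => by simp]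
    simp only [pow_zero, Matrix.one_apply, ite_and, Finset.sum_ite_eq', Finset.mem_univ, if_true]
  | succ n ih =>
    rw [pow_succ', Matrix.mul_apply,
      ← Fintype.sum_equiv (Fin.consEquiv fun _ : Fin (n + 2) => S)
      (fun sp : S × (Fin (n + 1) → S) => if sp.1 = i ∧ sp.2 (Fin.last n) = j then
        A sp.1 (sp.2 0) * ∏ k : Fin n, A (sp.2 k.castSucc) (sp.2 k.succ) else 0) _ ?_,
      Fintype.sum_prod_type]
    · simp only [ite_and, Finset.sum_ite_irrel, Finset.sum_const_zero, Finset.sum_ite_eq',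
        Finset.mem_univ, if_true]
      simp only [ih, Finset.mul_sum]
      rw [Finset.sum_comm]
      refine Finset.sum_congr rfl fun p _ => ?_
      simp only [ite_and, mul_ite, mul_zero, Finset.sum_ite_eq, Finset.mem_univ, if_true]
    · rintro ⟨s, p⟩
      simp only [Fin.consEquiv_apply, Fin.cons_zero, Fin.prod_univ_succ, Fin.castSucc_zero,
        Fin.cons_succ, ← Fin.succ_last, ← Fin.succ_castSucc]

/-- The power of a stochastic matrix is bounded entrywise by one. -/
lemma IsStochastic.pow {P : Matrix S S ℝ} (hP : IsStochastic P) (n : ℕ) :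
    IsStochastic (P ^ n) := by
  refine ⟨matrix_pow_nonneg hP.1 n, ?_⟩
  induction n with
  | zero => intro i; simp [Matrix.one_apply]
  | succ n ih =>
    intro i
    simp only [pow_succ, Matrix.mul_apply]
    rw [Finset.sum_comm]
    simp only [← Finset.mul_sum, hP.2, mul_one, ih i]

lemma IsPrimitive.exists_uniform_lower_bound {P : Matrix S S ℝ} (hP : IsStochastic P)
    (hprim : IsPrimitive P) : ∃ (c : ℝ) (m : ℕ), 0 < c ∧ ∀ n, m ≤ n → ∀ i j, c ≤ (P ^ n) i j := by
  obtain ⟨m, hm⟩ := hprim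
  obtain ⟨c, hc, hcm⟩ := exists_pos_le_of_pos (P ^ m)
  refine ⟨c, m, hc, fun n hn => ?_⟩
  induction n, hn using Nat.le_induction with
  | base => exact fun i j => hcm i j (hm i j)
  | succ n _ ih =>
    intro i j
    rw [pow_succ', Matrix.mul_apply]
    calc c = ∑ k, P i k * c := by rw [← Finset.sum_mul, hP.2, one_mul]
      _ ≤ _ := Finset.sum_le_sum fun k _ => mul_le_mul_of_nonneg_left (ih k j) (hP.1 i k)

lemma matrix_pow_mul_pow_le {A : Matrix S S ℝ} (hA : ∀ i j, 0 ≤ A i j) (m n : ℕ) (i k j : S) :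
    (A ^ m) i k * (A ^ n) k j ≤ (A ^ (m + n)) i j := by
  rw [pow_add, Matrix.mul_apply]
  exact Finset.single_le_sum (f := fun k => (A ^ m) i k * (A ^ n) k j)
    (fun l _ => mul_nonneg (matrix_pow_nonneg hA m i l) (matrix_pow_nonneg hA n l j))
    (Finset.mem_univ k)

/-- All entries of a power of `P^{(t)}` are controlled by any entry of a slightly larger power. -/
lemma IsPrimitive.exists_powerMatrix_pow_le {P : Matrix S S ℝ} (hP : IsStochastic P)
    (hprim : IsPrimitive P) (t : ℝ) (n₀ : ℕ) : ∃ (δ : ℝ) (m : ℕ), 0 < δ ∧ n₀ ≤ m ∧ ∀ n i j k l,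
      δ * (powerMatrix P t ^ n) k l ≤ (powerMatrix P t ^ (m + n + m)) i j := by
  obtain ⟨b, m₀, hb, hm₀⟩ := hprim.exists_uniform_lower_bound hP
  obtain ⟨m, hm₀m, hn₀m⟩ : ∃ m, m₀ ≤ m ∧ n₀ ≤ m := ⟨max m₀ n₀, le_max_left _ _, le_max_right _ _⟩
  have hpos : ∀ i j, 0 < (powerMatrix P t ^ m) i j := fun i j =>
    pow_apply_pos_of_support hP.1 (powerMatrix_nonneg P t)
      (fun i j h => by simpa [powerMatrix, h] using Real.rpow_pos_of_pos h t) m i j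
      (hb.trans_le (hm₀ m hm₀m i j))
  obtain ⟨c, hc, hcm⟩ := exists_pos_le_of_pos (powerMatrix P t ^ m)
  refine ⟨c * c, m, mul_pos hc hc, hn₀m, fun n i j k l => ?_⟩
  have hnn := matrix_pow_nonneg (powerMatrix_nonneg P t)
  calc c * c * (powerMatrix P t ^ n) k l = c * (powerMatrix P t ^ n) k l * c := by ring
    _ ≤ (powerMatrix P t ^ m) i k * (powerMatrix P t ^ n) k l * (powerMatrix P t ^ m) l j := by
      have := hnn n k l
      have := hnn m i k
      have := hcm i k (hpos i k)
      have := hcm l j (hpos l j)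
      gcongr
    _ ≤ (powerMatrix P t ^ (m + n)) i l * (powerMatrix P t ^ m) l j :=
      mul_le_mul_of_nonneg_right (matrix_pow_mul_pow_le (powerMatrix_nonneg P t) m n i k l)
        (hnn m l j)
    _ ≤ _ := matrix_pow_mul_pow_le (powerMatrix_nonneg P t) (m + n) m i l j

lemma betaMatrix_pow_apply (P : Matrix S S ℝ) (t : ℝ) (n : ℕ) (i j : S) :
    (betaMatrix P t ^ n) i j = ((powerMatrix P t ^ n) i j : ℂ) := by
  have : betaMatrix P t = Complex.ofRealHom.mapMatrix (powerMatrix P t) := by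
    ext i j
    simp only [betaMatrix, powerMatrix, Matrix.of_apply, RingHom.mapMatrix_apply, Matrix.map_apply]
    split_ifs <;> simp
  rw [this, ← map_pow]
  simp

end Matrices

section SpectralRadius

attribute [local instance] Matrix.linftyOpNormedRing Matrix.linftyOpNormedAlgebra

lemma spectralRadius_le_of_norm_pow_le {A B : Type*} [NormedRing A] [NormedAlgebra ℂ A]
    [CompleteSpace A] [NormedRing B] [NormedAlgebra ℂ B] [CompleteSpace B] {a : A} {b : B}
    {C : ℝ} (hC : 0 < C) (h : ∀ n : ℕ, ‖a ^ n‖ ≤ C * ‖b ^ n‖) :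
    spectralRadius ℂ a ≤ spectralRadius ℂ b := by
  have ha := spectrum.pow_norm_pow_one_div_tendsto_nhds_spectralRadius a
  have hb := spectrum.pow_norm_pow_one_div_tendsto_nhds_spectralRadius b
  have hc : Tendsto (fun n : ℕ => ENNReal.ofReal (C ^ (1 / n : ℝ))) atTop (nhds 1) := by
    rw [← ENNReal.ofReal_one]
    refine (ENNReal.continuous_ofReal.tendsto _).comp ?_
    have h0 : Tendsto (fun n : ℕ => (1 / n : ℝ)) atTop (nhds 0) := tendsto_one_div_atTop_nhds_zero_nat
    simpa using tendsto_const_nhds.rpow h0 (Or.inl hC.ne')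
  have hcb := ENNReal.Tendsto.mul hc (Or.inl one_ne_zero) hb (Or.inr ENNReal.one_ne_top)
  rw [one_mul] at hcb
  refine le_of_tendsto_of_tendsto' ha hcb fun n => ?_
  rw [← ENNReal.ofReal_mul (Real.rpow_nonneg hC.le _),
    ← Real.mul_rpow hC.le (norm_nonneg _)]
  exact ENNReal.ofReal_le_ofReal
    (Real.rpow_le_rpow (norm_nonneg _) (h n) (by positivity))

variable {S S' : Type*} [Fintype S] [DecidableEq S] [Fintype S'] [DecidableEq S']

lemma norm_apply_le_linfty (A : Matrix S S ℂ) (i j : S) : ‖A i j‖ ≤ ‖A‖ := by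
  rw [Matrix.linfty_opNorm_def]
  have h := Finset.le_sup (f := fun i => ∑ j, ‖A i j‖₊) (Finset.mem_univ i)
  have h' : ‖A i j‖₊ ≤ ∑ j, ‖A i j‖₊ :=
    Finset.single_le_sum (f := fun j => ‖A i j‖₊) (fun _ _ => zero_le) (Finset.mem_univ j)
  exact_mod_cast h'.trans h

lemma linfty_norm_le {A : Matrix S S ℂ} {c : ℝ} (hc : 0 ≤ c) (h : ∀ i j, ‖A i j‖ ≤ c) :
    ‖A‖ ≤ Fintype.card S * c := by
  rw [Matrix.linfty_opNorm_def]
  lift c to NNReal using hc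
  have : (Finset.univ.sup fun i => ∑ j, ‖A i j‖₊) ≤ Fintype.card S * c := by
    refine Finset.sup_le fun i _ => ?_
    refine (Finset.sum_le_card_nsmul _ _ c fun j _ => h i j).trans ?_
    simp
  exact_mod_cast this

/-- Comparing single entries of powers compares the `β`-functions. -/
lemma betaFunction_le_of_pow_le {P : Matrix S S ℝ} {Q : Matrix S' S' ℝ} (hP : IsStochastic P)
    (hprim : IsPrimitive P) {t C : ℝ} (hC : 0 ≤ C) (M n₀ : ℕ)
    (h : ∀ n, n₀ ≤ n → ∃ i j k l, (powerMatrix P t ^ n) i j ≤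
      C * (powerMatrix Q t ^ (n + M)) k l) : betaFunction P t ≤ betaFunction Q t := by
  obtain ⟨δ, m, hδ, hnm, hm⟩ := hprim.exists_powerMatrix_pow_le hP t n₀
  set K : ℝ := Fintype.card S * (δ⁻¹ * (C * ‖betaMatrix Q t ^ (m + m + M)‖)) with hK
  have hK0 : 0 ≤ K := by positivity
  refine spectralRadius_le_of_norm_pow_le (C := K + 1) (by positivity) fun n => ?_
  obtain ⟨i, j, k, l, hijkl⟩ := h (m + n + m) (by omega)
  have hQ : (powerMatrix Q t ^ (m + n + m + M)) k l ≤
      ‖betaMatrix Q t ^ (m + m + M)‖ * ‖betaMatrix Q t ^ n‖ := by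
    have h₁ := norm_apply_le_linfty (betaMatrix Q t ^ (m + n + m + M)) k l
    rw [betaMatrix_pow_apply, Complex.norm_real, Real.norm_eq_abs] at h₁
    refine (le_abs_self _).trans (h₁.trans ?_)
    rw [show m + n + m + M = (m + m + M) + n by omega, pow_add]
    exact norm_mul_le _ _
  have hent : ∀ a b, ‖(betaMatrix P t ^ n) a b‖ ≤
      δ⁻¹ * (C * (‖betaMatrix Q t ^ (m + m + M)‖ * ‖betaMatrix Q t ^ n‖)) := by
    intro a b
    rw [betaMatrix_pow_apply, Complex.norm_real, Real.norm_eq_abs,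
      abs_of_nonneg (matrix_pow_nonneg (powerMatrix_nonneg P t) n a b), inv_mul_eq_div,
      le_div_iff₀' hδ]
    exact (hm n i j a b).trans (hijkl.trans (mul_le_mul_of_nonneg_left hQ hC))
  calc ‖betaMatrix P t ^ n‖ ≤ Fintype.card S *
        (δ⁻¹ * (C * (‖betaMatrix Q t ^ (m + m + M)‖ * ‖betaMatrix Q t ^ n‖))) :=
        linfty_norm_le (by positivity) hent
    _ = K * ‖betaMatrix Q t ^ n‖ := by rw [hK]; ring
    _ ≤ (K + 1) * ‖betaMatrix Q t ^ n‖ := by gcongr; linarith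

end SpectralRadius

/-- Points of `D` at which the coordinates of the image beyond distance `N` from the origin are
determined by windows which do not contain the origin. -/
def controlledSet {A B : Type*} (D : Set (ℤ → A)) (φ : (ℤ → A) → (ℤ → B)) (N : ℕ) :
    Set (ℤ → A) :=
  {x | x ∈ D ∧ ∀ k : ℕ, N ≤ k → codeLength D φ (shiftBy k x) < k ∧
    codeLength D φ (shiftBy (-k) x) < k}

section Coding

variable {A B : Type*}

lemma shift_shiftBy (j : ℤ) (x : ℤ → A) : shift (shiftBy j x) = shiftBy (j + 1) x := by
  funext i
  simp only [shift, shiftBy]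
  congr 1
  ring

lemma shiftBy_zero (x : ℤ → A) : shiftBy 0 x = x := by
  funext i
  simp [shiftBy]

lemma exists_determinesAt_of_codeLength_lt {D : Set (ℤ → A)} {φ : (ℤ → A) → (ℤ → B)}
    {x : ℤ → A} {k : ℕ} (h : codeLength D φ x < k) :
    ∃ q r : ℕ, q + r < k ∧ DeterminesAt D φ q r x := by
  simp only [codeLength, iInf_lt_iff] at h
  obtain ⟨q, r, hd, hlt⟩ := h
  exact ⟨q, r, by exact_mod_cast hlt, hd⟩

variable [MeasurableSpace A] [MeasurableSpace B] {μ : Measure (ℤ → A)} {ν : Measure (ℤ → B)}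
  {D : Set (ℤ → A)} {φ : (ℤ → A) → (ℤ → B)}

namespace IsFactorMap

lemma shiftBy_mem_iff (hφ : IsFactorMap μ ν D φ) (j : ℤ) (x : ℤ → A) :
    shiftBy j x ∈ D ↔ x ∈ D := by
  have hs : ∀ x, shift x ∈ D ↔ x ∈ D := fun x => by
    conv_rhs => rw [← hφ.dom_shift_invariant]
    rfl
  induction j using Int.induction_on with
  | zero => rw [shiftBy_zero]
  | succ j ih => exact shift_shiftBy (j : ℤ) x ▸ (hs _).trans ih
  | pred j ih =>
    refine (hs _).symm.trans ?_
    rw [shift_shiftBy, sub_add_cancel]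
    exact ih

lemma map_shiftBy_apply (hφ : IsFactorMap μ ν D φ) (j : ℤ) {x : ℤ → A} (hx : x ∈ D) :
    φ (shiftBy j x) = shiftBy j (φ x) := by
  induction j using Int.induction_on with
  | zero => rw [shiftBy_zero, shiftBy_zero]
  | succ j ih =>
    rw [← shift_shiftBy, hφ.equivariant _ ((hφ.shiftBy_mem_iff _ _).2 hx), ih, shift_shiftBy]
  | pred j ih =>
    have h := hφ.equivariant _ ((hφ.shiftBy_mem_iff (-(j : ℤ) - 1) _).2 hx)
    rw [shift_shiftBy, sub_add_cancel, ih] at h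
    funext i
    have := congrFun h (i - 1)
    simp only [shift, shiftBy, sub_add_cancel] at this
    rw [← this]
    simp only [shiftBy]
    congr 1
    ring

/-- Changing a controlled point inside `[0, n]` changes its image only near `[0, n]`. -/
lemma apply_eq_of_controlled (hφ : IsFactorMap μ ν D φ) {N n : ℕ} {x z : ℤ → A}
    (hx : x ∈ controlledSet D φ N) (hx' : shiftBy n x ∈ controlledSet D φ N) (hz : z ∈ D)
    (h : ∀ i : ℤ, i < 0 ∨ (n : ℤ) < i → z i = x i) {m : ℤ}
    (hm : m ≤ -(N : ℤ) ∨ (n : ℤ) + N ≤ m) : φ z m = φ x m := by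
  have hval : ∀ w ∈ D, φ w m = φ (shiftBy m w) 0 := fun w hw => by
    rw [hφ.map_shiftBy_apply m hw]
    simp [shiftBy]
  rw [hval z hz, hval x hx.1]
  have hzm := (hφ.shiftBy_mem_iff m z).2 hz
  rcases hm with hm | hm
  · obtain ⟨k, rfl⟩ : ∃ k : ℕ, m = -k := ⟨m.natAbs, by omega⟩
    obtain ⟨q, r, hlt, hd⟩ :=
      exists_determinesAt_of_codeLength_lt (hx.2 k (by omega)).2
    exact hd _ hzm fun i h₁ h₂ => h _ (by omega)
  · obtain ⟨k, rfl⟩ : ∃ k : ℕ, m = n + k := ⟨(m - n).natAbs, by omega⟩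
    obtain ⟨q, r, hlt, hd⟩ :=
      exists_determinesAt_of_codeLength_lt (hx'.2 k (by omega)).1
    have hs : shiftBy (k : ℤ) (shiftBy n x) = shiftBy (n + k) x := by
      funext i
      simp only [shiftBy]
      congr 1
      ring
    rw [hs] at hd
    exact hd _ hzm fun i h₁ h₂ => h _ (by omega)

end IsFactorMap

lemma measurable_codeLength [Finite A] [DiscreteMeasurableSpace A] [Finite B]
    [DiscreteMeasurableSpace B] (hφ : Measurable φ) : Measurable (codeLength D φ) := by
  unfold codeLength
  refine Measurable.iInf fun q => Measurable.iInf fun r => ?_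
  have hset : MeasurableSet {x | DeterminesAt D φ q r x} := by
    obtain ⟨T, hT, hT'⟩ := exists_countable_words (A := A) (-q) r
    have : {x | DeterminesAt D φ q r x} = ⋃ w ∈ T, ⋃ b ∈ {b : B | ∀ y ∈ D, y ∈ cyl (-q) r w →
        φ y 0 = b}, cyl (-q) r w ∩ (fun x => φ x 0) ⁻¹' {b} := by
      ext x
      simp only [Set.mem_iUnion, exists_prop, Set.mem_ofPred_eq, Set.mem_inter_iff,
        Set.mem_preimage, Set.mem_singleton_iff]
      constructor
      · intro hx
        obtain ⟨w, hw, hwx⟩ := hT' x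
        refine ⟨w, hw, φ x 0, fun y hy hyw => hx y hy ?_, cyl_symm hwx, rfl⟩
        rw [cyl_congr hwx] at hyw
        exact hyw
      · rintro ⟨w, -, b, hb, hxw, rfl⟩ y hy hyx
        refine hb y hy ?_
        rw [← cyl_congr hxw]
        exact hyx
    rw [this]
    refine MeasurableSet.biUnion hT fun w _ => MeasurableSet.biUnion (Set.to_countable _)
      fun b _ => (measurableSet_cyl _ _ _).inter ?_
    exact ((measurable_pi_apply 0).comp hφ) (MeasurableSet.of_discrete)
  classical
  have : (fun x => ⨅ (_ : DeterminesAt D φ q r x), ((q : ℝ≥0∞) + (r : ℝ≥0∞))) =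
      fun x => if x ∈ {x | DeterminesAt D φ q r x} then ((q : ℝ≥0∞) + (r : ℝ≥0∞)) else ⊤ := by
    funext x
    by_cases h : DeterminesAt D φ q r x <;> simp [h]
  rw [this]
  exact Measurable.ite hset measurable_const measurable_const

lemma tsum_indicator_natCast_le (c : ℝ≥0∞) :
    ∑' k : ℕ, (if (k : ℝ≥0∞) ≤ c then (1 : ℝ≥0∞) else 0) ≤ c + 1 := by
  by_cases hc : c = ⊤
  · simp [hc]
  lift c to NNReal using hc
  rw [tsum_eq_sum (s := Finset.range (⌊c⌋₊ + 1)) fun k hk => ?_]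
  · calc ∑ k ∈ Finset.range (⌊c⌋₊ + 1), (if (k : ℝ≥0∞) ≤ c then (1 : ℝ≥0∞) else 0)
        ≤ ∑ k ∈ Finset.range (⌊c⌋₊ + 1), (1 : ℝ≥0∞) :=
          Finset.sum_le_sum fun k _ => by split_ifs <;> simp
      _ = ((⌊c⌋₊ : NNReal) : ℝ≥0∞) + 1 := by simp
      _ ≤ c + 1 := by
        gcongr
        exact_mod_cast Nat.floor_le (zero_le)
  · rw [if_neg]
    intro h
    have h' : (k : NNReal) ≤ c := by exact_mod_cast h
    exact hk (Finset.mem_range.2 (Nat.lt_succ_of_le (Nat.le_floor h')))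

lemma tsum_measure_natCast_le_lt_top {Ω : Type*} [MeasurableSpace Ω] {μ : Measure Ω}
    [IsFiniteMeasure μ] {f : Ω → ℝ≥0∞} (hf : Measurable f) (hfin : ∫⁻ x, f x ∂μ < ⊤) :
    ∑' k : ℕ, μ {x | (k : ℝ≥0∞) ≤ f x} < ⊤ := by
  have hm : ∀ k : ℕ, MeasurableSet {x | (k : ℝ≥0∞) ≤ f x} := fun k =>
    measurableSet_le measurable_const hf
  calc ∑' k : ℕ, μ {x | (k : ℝ≥0∞) ≤ f x}
      = ∑' k : ℕ, ∫⁻ x, {x | (k : ℝ≥0∞) ≤ f x}.indicator 1 x ∂μ := by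
        simp only [lintegral_indicator_one (hm _)]
    _ = ∫⁻ x, ∑' k : ℕ, {x | (k : ℝ≥0∞) ≤ f x}.indicator 1 x ∂μ :=
        (lintegral_tsum fun k => (measurable_one.indicator (hm k)).aemeasurable).symm
    _ ≤ ∫⁻ x, f x + 1 ∂μ := by
        refine lintegral_mono fun x => ?_
        refine le_trans (le_of_eq ?_) (tsum_indicator_natCast_le (f x))
        exact tsum_congr fun k => by simp [Set.indicator_apply]
    _ < ⊤ := by
        rw [lintegral_add_right _ measurable_const]
        simpa using hfin

/-- If the code length is integrable, almost all of the space is controlled. -/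
lemma IsFactorMap.eventually_measure_compl_controlledSet_lt [Finite A] [DiscreteMeasurableSpace A]
    [Finite B] [DiscreteMeasurableSpace B] [IsProbabilityMeasure μ] (hφ : IsFactorMap μ ν D φ)
    (hμ : ∀ j, μ.map (shiftBy j) = μ) (hfin : ∫⁻ x, codeLength D φ x ∂μ < ⊤) {ε : ℝ≥0∞}
    (hε : 0 < ε) : ∀ᶠ N in atTop, μ (controlledSet D φ N)ᶜ < ε := by
  have hC := measurable_codeLength (D := D) hφ.measurable_map
  have hsum := tsum_measure_natCast_le_lt_top hC hfin
  set bad : ℕ → Set (ℤ → A) := fun k => {x | (k : ℝ≥0∞) ≤ codeLength D φ x} with hbad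
  have hbadm : ∀ k, MeasurableSet (bad k) := fun k => measurableSet_le measurable_const hC
  have hD : μ Dᶜ = 0 := (prob_compl_eq_zero_iff hφ.dom_measurable).2 hφ.dom_full
  have hpre : ∀ (j : ℤ) (k : ℕ), μ (shiftBy j ⁻¹' bad k) = μ (bad k) := fun j k => by
    rw [← Measure.map_apply (measurable_shiftBy j) (hbadm k), hμ]
  have hle : ∀ N, μ (controlledSet D φ N)ᶜ ≤
      (∑' k, μ (bad (k + N))) + ∑' k, μ (bad (k + N)) := by
    intro N
    have hsub : (controlledSet D φ N)ᶜ ⊆ Dᶜ ∪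
        ((⋃ k : ℕ, shiftBy ((k + N : ℕ) : ℤ) ⁻¹' bad (k + N)) ∪
          ⋃ k : ℕ, shiftBy (-((k + N : ℕ) : ℤ)) ⁻¹' bad (k + N)) := by
      intro x hx
      by_contra hcon
      simp only [Set.mem_union, Set.mem_compl_iff, Set.mem_iUnion, Set.mem_preimage, not_or,
        not_not, not_exists, hbad, Set.mem_ofPred_eq, not_le] at hcon
      refine hx ⟨hcon.1, fun k hk => ?_⟩
      have h₁ := hcon.2.1 (k - N)
      have h₂ := hcon.2.2 (k - N)
      rw [Nat.sub_add_cancel hk] at h₁ h₂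
      exact ⟨h₁, h₂⟩
    refine (measure_mono hsub).trans ((measure_union_le _ _).trans ?_)
    rw [hD, zero_add]
    refine (measure_union_le _ _).trans (add_le_add ?_ ?_) <;>
    · refine (measure_iUnion_le _).trans (le_of_eq ?_)
      exact tsum_congr fun k => hpre _ _
  have ht := ENNReal.tendsto_sum_nat_add (fun k => μ (bad k)) hsum.ne
  have ht2 := ht.add ht
  rw [add_zero] at ht2
  filter_upwards [ht2.eventually_lt_const hε] with N hN
  exact (hle N).trans_lt hN

end Coding

section PathSums

variable {S S' : Type*}

/-- The path of length `n` read by `x` from position `a` on. -/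
def pathOf (a : ℤ) (n : ℕ) (x : ℤ → S) : Fin (n + 1) → S := fun k => x (a + k)

/-- Extend a path to a bi-infinite sequence which reads the path along `[0, n]`. -/
def seqOf {n : ℕ} (p : Fin (n + 1) → S) : ℤ → S :=
  fun i => p ⟨min i.toNat n, Nat.lt_succ_of_le (min_le_right _ _)⟩

/-- The weight of a finite path. -/
def finPathWeight (P : Matrix S S ℝ) {n : ℕ} (p : Fin (n + 1) → S) : ℝ :=
  ∏ k : Fin n, P (p k.castSucc) (p k.succ)

lemma pathOf_seqOf {n : ℕ} (p : Fin (n + 1) → S) : pathOf 0 n (seqOf p) = p := by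
  funext k
  simp only [pathOf, seqOf]
  congr 1
  ext
  simp
  omega

lemma finPathWeight_pathOf (P : Matrix S S ℝ) (a : ℤ) (n : ℕ) (x : ℤ → S) :
    finPathWeight P (pathOf a n x) = pathWeight P a (a + n) x := by
  refine Finset.prod_bij (fun (k : Fin n) _ => a + (k : ℤ)) ?_ ?_ ?_ ?_
  · intro k _
    exact Finset.mem_Ico.2 ⟨by omega, by omega⟩
  · intro k _ l _ h
    ext
    omega
  · intro i hi
    rw [Finset.mem_Ico] at hi
    exact ⟨⟨(i - a).toNat, by omega⟩, Finset.mem_univ _, by simp only; omega⟩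
  · intro k _
    simp [pathOf, add_assoc]

lemma finPathWeight_eq_pathWeight_seqOf (P : Matrix S S ℝ) {n : ℕ} (p : Fin (n + 1) → S) :
    finPathWeight P p = pathWeight P 0 n (seqOf p) := by
  conv_lhs => rw [← pathOf_seqOf p]
  rw [finPathWeight_pathOf, zero_add]

variable [Fintype S] [DecidableEq S] [Fintype S'] [DecidableEq S']

open Classical in
lemma powerMatrix_pow_apply_eq_sum {P : Matrix S S ℝ} (hP : ∀ i j, 0 ≤ P i j) (t : ℝ) (n : ℕ)
    (i j : S) : (powerMatrix P t ^ n) i j =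
      ∑ p : Fin (n + 1) → S with p 0 = i ∧ p (Fin.last n) = j ∧ 0 < finPathWeight P p,
        finPathWeight P p ^ t := by
  rw [matrix_pow_apply_eq_sum, Finset.sum_filter]
  refine Finset.sum_congr rfl fun p _ => ?_
  rw [prod_powerMatrix hP]
  simp only [ite_and]
  rfl

/-- An injective, weight preserving (up to a constant) coding of paths compares the entries of
powers of `P^{(t)}` and `Q^{(t)}`. -/
lemma powerMatrix_pow_apply_le_of_coding {P : Matrix S S ℝ} {Q : Matrix S' S' ℝ}
    (hP : ∀ i j, 0 ≤ P i j) (hQ : ∀ i j, 0 ≤ Q i j) {n N : ℕ} {φ : (ℤ → S) → (ℤ → S')}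
    {x : ℤ → S} (hx : 0 < pathWeight P 0 n x) (hy : 0 < pathWeight Q (-N) (n + N) (φ x))
    (hcode : ∀ u : ℤ → S, u 0 = x 0 → u n = x n → 0 < pathWeight P 0 n u →
      φ (splice 0 n u x) (-N) = φ x (-N) ∧ φ (splice 0 n u x) (n + N) = φ x (n + N) ∧
      pathWeight Q (-N) (n + N) (φ (splice 0 n u x)) * pathWeight P 0 n x =
        pathWeight P 0 n u * pathWeight Q (-N) (n + N) (φ x))
    (hinj : ∀ u v : ℤ → S, u 0 = x 0 → u n = x n → 0 < pathWeight P 0 n u →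
      v 0 = x 0 → v n = x n → 0 < pathWeight P 0 n v →
      φ (splice 0 n u x) ∈ cyl (-N) (n + N) (φ (splice 0 n v x)) →
      splice 0 n u x = splice 0 n v x) (t : ℝ) :
    (powerMatrix P t ^ n) (x 0) (x n) ≤
      (pathWeight P 0 n x / pathWeight Q (-N) (n + N) (φ x)) ^ t *
        (powerMatrix Q t ^ (n + 2 * N)) (φ x (-N)) (φ x (n + N)) := by
  classical
  set K := pathWeight P 0 n x / pathWeight Q (-N) (n + N) (φ x) with hK
  have hK0 : 0 < K := div_pos hx hy
  have hlen : (-(N : ℤ) + ((n + 2 * N : ℕ) : ℤ)) = n + N := by push_cast; ring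
  let Φ : (Fin (n + 1) → S) → (Fin (n + 2 * N + 1) → S') := fun p =>
    pathOf (-N) (n + 2 * N) (φ (splice 0 n (seqOf p) x))
  have hΦw : ∀ p, finPathWeight Q (Φ p) =
      pathWeight Q (-N) (n + N) (φ (splice 0 n (seqOf p) x)) := fun p => by
    simp only [Φ]
    rw [finPathWeight_pathOf, hlen]
  have hends : ∀ p : Fin (n + 1) → S, seqOf p 0 = p 0 ∧ seqOf p n = p (Fin.last n) := fun p => by
    exact ⟨rfl, congrArg p (Fin.ext (by simp))⟩
  rw [powerMatrix_pow_apply_eq_sum hP, powerMatrix_pow_apply_eq_sum hQ]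
  set F := Finset.univ.filter fun p : Fin (n + 1) → S =>
    p 0 = x 0 ∧ p (Fin.last n) = x n ∧ 0 < finPathWeight P p with hF
  have hFmem : ∀ p ∈ F, seqOf p 0 = x 0 ∧ seqOf p n = x n ∧ 0 < pathWeight P 0 n (seqOf p) := by
    intro p hp
    obtain ⟨-, h₁, h₂, h₃⟩ := Finset.mem_filter.1 hp
    rw [finPathWeight_eq_pathWeight_seqOf] at h₃
    exact ⟨(hends p).1.trans h₁, (hends p).2.trans h₂, h₃⟩
  have hw : ∀ p ∈ F, finPathWeight P p = K * finPathWeight Q (Φ p) := by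
    intro p hp
    obtain ⟨h₁, h₂, h₃⟩ := hFmem p hp
    rw [hΦw, finPathWeight_eq_pathWeight_seqOf, hK, div_mul_eq_mul_div, eq_div_iff hy.ne',
      ← (hcode _ h₁ h₂ h₃).2.2, mul_comm]
  have hΦpos : ∀ p ∈ F, 0 < finPathWeight Q (Φ p) := by
    intro p hp
    have := (Finset.mem_filter.1 hp).2.2.2
    rw [hw p hp] at this
    exact (pos_iff_pos_of_mul_pos this).1 hK0
  have hΦinj : Set.InjOn Φ F := by
    intro p hp q hq hpq
    obtain ⟨h₁, h₂, h₃⟩ := hFmem p hp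
    obtain ⟨h₁', h₂', h₃'⟩ := hFmem q hq
    have hz := hinj _ _ h₁ h₂ h₃ h₁' h₂' h₃' fun i hi₁ hi₂ => by
      have := congrFun hpq ⟨(i + N).toNat, by omega⟩
      simp only [Φ, pathOf] at this
      rwa [show -(N : ℤ) + ((i + N).toNat : ℤ) = i by omega] at this
    rw [← pathOf_seqOf p, ← pathOf_seqOf q]
    funext k
    simp only [pathOf]
    have hk := k.2
    have := congrFun hz (0 + (k : ℤ))
    rwa [splice_of_mem (by omega) (by omega), splice_of_mem (by omega) (by omega)] at this
  calc ∑ p ∈ F, finPathWeight P p ^ t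
      = ∑ p ∈ F, K ^ t * finPathWeight Q (Φ p) ^ t :=
        Finset.sum_congr rfl fun p hp => by
          rw [hw p hp, Real.mul_rpow hK0.le (hΦpos p hp).le]
    _ = K ^ t * ∑ q ∈ F.image Φ, finPathWeight Q q ^ t := by
        rw [← Finset.mul_sum, Finset.sum_image hΦinj]
    _ ≤ _ := by
        refine mul_le_mul_of_nonneg_left ?_ (Real.rpow_nonneg hK0.le t)
        refine Finset.sum_le_sum_of_subset_of_nonneg (fun q hq => ?_) fun q hq _ =>
          Real.rpow_nonneg (Finset.mem_filter.1 hq).2.2.2.le t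
        obtain ⟨p, hp, rfl⟩ := Finset.mem_image.1 hq
        obtain ⟨h₁, h₂, h₃⟩ := hFmem p hp
        obtain ⟨c₁, c₂, -⟩ := hcode _ h₁ h₂ h₃
        refine Finset.mem_filter.2 ⟨Finset.mem_univ _, ?_, ?_, hΦpos p hp⟩
        · simpa [Φ, pathOf] using c₁
        · simp only [Φ, pathOf, Fin.val_last]
          rw [hlen, c₂]

end PathSums

section Isomorphism

variable {S S' : Type*} [Fintype S] [Fintype S']
  [MeasurableSpace S] [DiscreteMeasurableSpace S] [MeasurableSpace S'] [DiscreteMeasurableSpace S']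
  {P : Matrix S S ℝ} {Q : Matrix S' S' ℝ} {ppi : S → ℝ} {qpi : S' → ℝ}
  {μ : Measure (ℤ → S)} {ν : Measure (ℤ → S')} {D : Set (ℤ → S)} {E : Set (ℤ → S')}
  {φ : (ℤ → S) → (ℤ → S')} {ψ : (ℤ → S') → (ℤ → S)}

/-- On a set of positive measure on which an isomorphism conjugates one splicing to another, the
two splicings change the weights by the same factor. -/
lemma measure_eq_zero_or_weight_mul_eq (hP : IsStochastic P) (hQ : IsStochastic Q)
    (hμ : IsMarkovMeasure μ P ppi) (hν : IsMarkovMeasure ν Q qpi)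
    (hφ : IsFactorMap μ ν D φ) (hψ : IsFactorMap ν μ E ψ) (hE : ν Eᶜ = 0)
    (hφψ : ∀ x ∈ D, φ x ∈ E ∧ ψ (φ x) = x) (hψφ : ∀ y ∈ E, ψ y ∈ D ∧ φ (ψ y) = y)
    {a b a' b' : ℤ} (hab : a ≤ b) (hab' : a' ≤ b') {u w : ℤ → S} {v v' : ℤ → S'}
    (ha : u a = w a) (hb : u b = w b) (ha' : v' a' = v a') (hb' : v' b' = v b') :
    μ {x | x ∈ D ∧ x ∈ cyl a b w ∧ splice a b u x ∈ D ∧ φ x ∈ cyl a' b' v ∧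
      φ (splice a b u x) = splice a' b' v' (φ x)} = 0 ∨
    pathWeight Q a' b' v' * pathWeight P a b w = pathWeight P a b u * pathWeight Q a' b' v := by
  have := hμ.isFiniteMeasure
  set X := {x | x ∈ D ∧ x ∈ cyl a b w ∧ splice a b u x ∈ D ∧ φ x ∈ cyl a' b' v ∧
      φ (splice a b u x) = splice a' b' v' (φ x)} with hX
  have hXm : MeasurableSet X :=
    hφ.dom_measurable.inter ((measurableSet_cyl a b w).inter
      ((measurable_splice a b u hφ.dom_measurable).inter
        ((hφ.measurable_map (measurableSet_cyl a' b' v)).inter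
          (measurableSet_eq_fun (hφ.measurable_map.comp (measurable_splice a b u))
            ((measurable_splice a' b' v').comp hφ.measurable_map)))))
  set Z : Set (ℤ → S) := splice a b w ⁻¹' X ∩ cyl a b u with hZ
  have hZm : MeasurableSet Z := (measurable_splice a b w hXm).inter (measurableSet_cyl a b u)
  have htr : ∀ Y : Set (ℤ → S), MeasurableSet Y → ν (ψ ⁻¹' Y ∩ E) = μ Y := fun Y hY => by
    rw [measure_inter_conull hE, ← Measure.map_apply hψ.measurable_map hY, ← hψ.pushforward]
  have h₁ := hμ.splice_measure hP hab ha hb hZm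
  have hZ₁ : splice a b u ⁻¹' Z ∩ cyl a b w = X := by
    ext x
    constructor
    · rintro ⟨⟨hx, -⟩, hxw⟩
      rw [Set.mem_preimage, splice_splice, splice_eq_self hxw] at hx
      exact hx
    · intro hx
      refine ⟨⟨?_, splice_mem_cyl _ _ _ _⟩, hx.2.1⟩
      rwa [Set.mem_preimage, splice_splice, splice_eq_self hx.2.1]
  have hZ₂ : Z ∩ cyl a b u = Z := Set.inter_eq_left.2 Set.inter_subset_right
  rw [hZ₁, hZ₂] at h₁
  have h₂ := hν.splice_measure hQ hab' ha' hb'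
    ((hψ.measurable_map hZm).inter hψ.dom_measurable)
  have hback : ∀ x ∈ X, splice a b u x ∈ Z := fun x hx =>
    ⟨by rwa [Set.mem_preimage, splice_splice, splice_eq_self hx.2.1], splice_mem_cyl _ _ _ _⟩
  have hfwd : ∀ y, y ∈ ψ ⁻¹' Z ∩ E → y ∈ cyl a' b' v' ∧ splice a' b' v y ∈ ψ ⁻¹' X ∩ E := by
    rintro y ⟨⟨hyX, hyu⟩, hyE⟩
    have hy := (hψφ y hyE).2
    have hsp : splice a b u (splice a b w (ψ y)) = ψ y := by
      rw [splice_splice, splice_eq_self hyu]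
    obtain ⟨hx₁, -, -, hx₄, hx₅⟩ := id hyX
    rw [hsp, hy] at hx₅
    refine ⟨hx₅ ▸ splice_mem_cyl _ _ _ _, ?_⟩
    have : splice a' b' v y = φ (splice a b w (ψ y)) := by
      have h := congrArg (splice a' b' v) hx₅
      rwa [splice_splice, splice_eq_self hx₄] at h
    rw [this]
    refine ⟨?_, (hφψ _ hx₁).1⟩
    rw [Set.mem_preimage, (hφψ _ hx₁).2]
    exact hyX
  have hZ₃ : splice a' b' v' ⁻¹' (ψ ⁻¹' Z ∩ E) ∩ cyl a' b' v = ψ ⁻¹' X ∩ E := by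
    ext y
    constructor
    · rintro ⟨hy, hyv⟩
      have := (hfwd _ hy).2
      rwa [splice_splice, splice_eq_self hyv] at this
    · rintro ⟨hyX, hyE⟩
      have hy := (hψφ y hyE).2
      obtain ⟨-, -, hx₃, hx₄, hx₅⟩ := id hyX
      rw [hy] at hx₄ hx₅
      refine ⟨?_, hx₄⟩
      rw [Set.mem_preimage, ← hx₅]
      refine ⟨?_, (hφψ _ hx₃).1⟩
      rw [Set.mem_preimage, (hφψ _ hx₃).2]
      exact hback _ hyX
  have hZ₄ : ψ ⁻¹' Z ∩ E ∩ cyl a' b' v' = ψ ⁻¹' Z ∩ E :=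
    Set.inter_eq_left.2 fun y hy => (hfwd y hy).1
  rw [hZ₃, hZ₄, htr X hXm, htr Z hZm] at h₂
  by_cases hX0 : μ X = 0
  · exact Or.inl hX0
  right
  have hmul : ENNReal.ofReal (pathWeight Q a' b' v' * pathWeight P a b w) * μ X =
      ENNReal.ofReal (pathWeight P a b u * pathWeight Q a' b' v) * μ X := by
    rw [ENNReal.ofReal_mul (hQ.pathWeight_nonneg _ _ _),
      ENNReal.ofReal_mul (hP.pathWeight_nonneg _ _ _), mul_right_comm, h₂, mul_right_comm _ _ (μ X),
      h₁]
    ring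
  have := (ENNReal.mul_left_inj hX0 (measure_ne_top μ X)).1 hmul
  exact (ENNReal.ofReal_eq_ofReal_iff
    (mul_nonneg (hQ.pathWeight_nonneg _ _ _) (hP.pathWeight_nonneg _ _ _))
    (mul_nonneg (hP.pathWeight_nonneg _ _ _) (hQ.pathWeight_nonneg _ _ _))).1 this

/-- Almost surely, every splicing of a word of positive weight stays in the domain and changes the
weight by the same factor as it changes the weight of the image. -/
lemma ae_forall_splice_weight_mul_eq (hP : IsStochastic P) (hQ : IsStochastic Q)
    (hμ : IsMarkovMeasure μ P ppi) (hν : IsMarkovMeasure ν Q qpi)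
    (hφ : IsFactorMap μ ν D φ) (hψ : IsFactorMap ν μ E ψ) (hD : μ Dᶜ = 0) (hE : ν Eᶜ = 0)
    (hφψ : ∀ x ∈ D, φ x ∈ E ∧ ψ (φ x) = x) (hψφ : ∀ y ∈ E, ψ y ∈ D ∧ φ (ψ y) = y)
    {a b a' b' : ℤ} (hab : a ≤ b) (hab' : a' ≤ b') :
    ∀ᵐ x ∂μ, x ∈ D → ∀ u : ℤ → S, u a = x a → u b = x b → 0 < pathWeight P a b u →
      splice a b u x ∈ D ∧ ((∀ m, m ≤ a' ∨ b' ≤ m → φ (splice a b u x) m = φ x m) →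
        pathWeight Q a' b' (φ (splice a b u x)) * pathWeight P a b x =
          pathWeight P a b u * pathWeight Q a' b' (φ x)) := by
  let p : (ℤ → S) → (ℤ → S) → Prop := fun z x => x ∈ D → z a = x a → z b = x b →
    0 < pathWeight P a b z → z ∈ D ∧ ((∀ m, m ≤ a' ∨ b' ≤ m → φ z m = φ x m) →
      pathWeight Q a' b' (φ z) * pathWeight P a b x =
        pathWeight P a b z * pathWeight Q a' b' (φ x))
  suffices h : ∀ᵐ x ∂μ, ∀ u : ℤ → S, p (splice a b u x) x by
    filter_upwards [h] with x hx hxD u ha hb hu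
    have := hx u hxD (by rwa [splice_of_mem le_rfl hab]) (by rwa [splice_of_mem hab le_rfl])
      (by rwa [pathWeight_congr (splice_mem_cyl a b u x)])
    rwa [pathWeight_congr (splice_mem_cyl a b u x)] at this
  refine ae_forall_splice (p := p) a b fun u => ?_
  simp only [p, splice_of_mem le_rfl hab, splice_of_mem hab le_rfl,
    pathWeight_congr (splice_mem_cyl a b u _)]
  by_cases hu : 0 < pathWeight P a b u
  swap
  · exact .of_forall fun x _ _ _ h => (hu h).elim
  refine ae_of_forall_cyl a b fun w => ?_
  by_cases hw : u a = w a ∧ u b = w b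
  swap
  · refine .of_forall fun x hx _ h₁ h₂ => (hw ⟨?_, ?_⟩).elim
    · rw [h₁, hx a le_rfl hab]
    · rw [h₂, hx b hab le_rfl]
  obtain ⟨T, hT, hT'⟩ := exists_countable_words (A := S') a' b'
  have hae : ∀ᵐ x ∂μ, ∀ v ∈ T, ∀ v' ∈ T, v' a' = v a' → v' b' = v b' →
      x ∈ {x | x ∈ D ∧ x ∈ cyl a b w ∧ splice a b u x ∈ D ∧ φ x ∈ cyl a' b' v ∧
      φ (splice a b u x) = splice a' b' v' (φ x)} →
      pathWeight Q a' b' v' * pathWeight P a b w =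
        pathWeight P a b u * pathWeight Q a' b' v := by
    refine (ae_ball_iff hT).2 fun v _ => (ae_ball_iff hT).2 fun v' _ => ?_
    by_cases hv : v' a' = v a' ∧ v' b' = v b'
    swap
    · exact .of_forall fun x h₁ h₂ => (hv ⟨h₁, h₂⟩).elim
    rcases measure_eq_zero_or_weight_mul_eq hP hQ hμ hν hφ hψ hE hφψ hψφ hab hab' hw.1 hw.2
      hv.1 hv.2 with h0 | h
    · filter_upwards [measure_eq_zero_iff_ae_notMem.1 h0] with x hx _ _ h
      exact (hx h).elim
    · exact .of_forall fun x _ _ _ => h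
  filter_upwards [hae, hμ.ae_splice_mem hP hφ.dom_measurable hD hab u hu] with x hx hxD hxw hxD'
    h₁ h₂ h₃
  refine ⟨hxD h₁ h₂, fun hm => ?_⟩
  obtain ⟨v, hv, hvx⟩ := hT' (φ x)
  obtain ⟨v', hv', hvx'⟩ := hT' (φ (splice a b u x))
  have hres := hx v hv v' hv'
    (by rw [hvx a' le_rfl hab', hvx' a' le_rfl hab', hm a' (Or.inl le_rfl)])
    (by rw [hvx b' hab' le_rfl, hvx' b' hab' le_rfl, hm b' (Or.inr le_rfl)])
    ⟨hxD', hxw, hxD h₁ h₂, cyl_symm hvx, ?_⟩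
  · rwa [pathWeight_congr hvx, pathWeight_congr hvx', ← pathWeight_congr hxw] at hres
  · funext i
    by_cases hi : a' ≤ i ∧ i ≤ b'
    · rw [splice_of_mem hi.1 hi.2, hvx' i hi.1 hi.2]
    · rw [hm i (by omega)]
      simp [splice, hi]

variable [DecidableEq S'] [DecidableEq S]

/-- Almost surely, if both ends of the window `[0, n]` are controlled then powers of `P^{(t)}` and
`Q^{(t)}` are compared by the ratio of the weights of the point and of its image. -/
lemma ae_powerMatrix_pow_apply_le (hP : IsStochastic P) (hQ : IsStochastic Q)
    (hμ : IsMarkovMeasure μ P ppi) (hν : IsMarkovMeasure ν Q qpi)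
    (hφ : IsFactorMap μ ν D φ) (hψ : IsFactorMap ν μ E ψ) (hD : μ Dᶜ = 0) (hE : ν Eᶜ = 0)
    (hφψ : ∀ x ∈ D, φ x ∈ E ∧ ψ (φ x) = x) (hψφ : ∀ y ∈ E, ψ y ∈ D ∧ φ (ψ y) = y)
    (n N : ℕ) :
    ∀ᵐ x ∂μ, x ∈ controlledSet D φ N → shiftBy n x ∈ controlledSet D φ N →
      0 < pathWeight P 0 n x → 0 < pathWeight Q (-N) (n + N) (φ x) → ∀ t : ℝ,
      (powerMatrix P t ^ n) (x 0) (x n) ≤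
        (pathWeight P 0 n x / pathWeight Q (-N) (n + N) (φ x)) ^ t *
          (powerMatrix Q t ^ (n + 2 * N)) (φ x (-N)) (φ x (n + N)) := by
  filter_upwards [ae_forall_splice_weight_mul_eq hP hQ hμ hν hφ hψ hD hE hφψ hψφ
    (a := 0) (b := n) (a' := -N) (b' := n + N) (by omega) (by omega)] with x hx hc hc' hpos hpos'
  have hm : ∀ u : ℤ → S, u 0 = x 0 → u n = x n → 0 < pathWeight P 0 n u → ∀ m : ℤ,
      m ≤ -(N : ℤ) ∨ (n : ℤ) + N ≤ m → φ (splice 0 n u x) m = φ x m := by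
    intro u h₁ h₂ h₃ m hm
    refine hφ.apply_eq_of_controlled hc hc' (hx hc.1 u h₁ h₂ h₃).1 ?_ hm
    rintro i (hi | hi)
    · exact splice_of_lt hi
    · exact splice_of_gt hi
  refine powerMatrix_pow_apply_le_of_coding hP.1 hQ.1 hpos hpos' ?_ ?_
  · intro u h₁ h₂ h₃
    exact ⟨hm u h₁ h₂ h₃ _ (Or.inl le_rfl), hm u h₁ h₂ h₃ _ (Or.inr le_rfl),
      (hx hc.1 u h₁ h₂ h₃).2 (hm u h₁ h₂ h₃)⟩
  · intro u v h₁ h₂ h₃ h₁' h₂' h₃' h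
    rw [← (hφψ _ (hx hc.1 u h₁ h₂ h₃).1).2, ← (hφψ _ (hx hc.1 v h₁' h₂' h₃').1).2]
    congr 1
    funext i
    by_cases hi : -(N : ℤ) ≤ i ∧ i ≤ n + N
    · exact h i hi.1 hi.2
    · rw [hm u h₁ h₂ h₃ i (by omega), hm v h₁' h₂' h₃' i (by omega)]

end Isomorphism

section BetaFunction

variable {S S' : Type*} [Fintype S] [DecidableEq S] [Fintype S'] [DecidableEq S']
  {P : Matrix S S ℝ} {Q : Matrix S' S' ℝ}

lemma rpow_le_rpow_add_rpow {a b K : ℝ} (ha : 0 < a) (haK : a ≤ K) (hKb : K ≤ b) (t : ℝ) :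
    K ^ t ≤ a ^ t + b ^ t := by
  have hK := ha.trans_le haK
  have h₁ := Real.rpow_nonneg ha.le t
  have h₂ := Real.rpow_nonneg (hK.le.trans hKb) t
  rcases le_total 0 t with ht | ht
  · linarith [Real.rpow_le_rpow hK.le hKb ht]
  · linarith [Real.rpow_le_rpow_of_nonpos ha haK ht]

/-- Four events of measure less than `1 / 4` leave room for a point avoiding all of them. -/
lemma exists_notMem_of_measure_lt_quarter {Ω : Type*} [MeasurableSpace Ω] {μ : Measure Ω}
    [IsProbabilityMeasure μ] {A B C F : Set Ω} (hA : μ A < 4⁻¹) (hB : μ B < 4⁻¹)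
    (hC : μ C < 4⁻¹) (hF : μ F < 4⁻¹) {p : Ω → Prop} (hp : ∀ᵐ x ∂μ, p x) :
    ∃ x, p x ∧ x ∉ A ∧ x ∉ B ∧ x ∉ C ∧ x ∉ F := by
  by_contra! h
  have hle : (1 : ℝ≥0∞) ≤ μ A + μ B + μ C + μ F := by
    calc (1 : ℝ≥0∞) = μ Set.univ := measure_univ.symm
      _ ≤ μ ({x | ¬ p x} ∪ (A ∪ B ∪ C ∪ F)) := measure_mono fun x _ => by
          by_cases hx : p x
          · by_contra hn
            simp only [Set.mem_union, not_or] at hn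
            exact hn.2.2 (h x hx hn.2.1.1.1 hn.2.1.1.2 hn.2.1.2)
          · exact Or.inl hx
      _ ≤ μ {x | ¬ p x} + μ (A ∪ B ∪ C ∪ F) := measure_union_le _ _
      _ = μ (A ∪ B ∪ C ∪ F) := by rw [ae_iff.1 hp, zero_add]
      _ ≤ μ A + μ B + μ C + μ F :=
          (measure_union_le _ _).trans (add_le_add_left ((measure_union_le _ _).trans
            (add_le_add_left (measure_union_le _ _) _)) _)
  have hlt : μ A + μ B + μ C + μ F < 4⁻¹ + 4⁻¹ + 4⁻¹ + 4⁻¹ :=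
    ENNReal.add_lt_add (ENNReal.add_lt_add (ENNReal.add_lt_add hA hB) hC) hF
  have hone : (4⁻¹ + 4⁻¹ + 4⁻¹ + 4⁻¹ : ℝ≥0∞) = 1 := by
    calc (4⁻¹ + 4⁻¹ + 4⁻¹ + 4⁻¹ : ℝ≥0∞) = 4 * 4⁻¹ := by ring
      _ = 1 := ENNReal.mul_inv_cancel (by norm_num) (by norm_num)
  exact (hle.trans_lt (hlt.trans_eq hone)).false

/-- A matrix inequality along a path, in which the powers of a stochastic matrix `Q` are at most
`1`, bounds the ratio of weights from below. -/
lemma le_ratio_of_pow_apply_le (hP : IsStochastic P) (hQ : IsStochastic Q) {c K : ℝ} {n m : ℕ}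
    {i j : S} {k l : S'} (hc : c ≤ (P ^ n) i j) (hK : 0 ≤ K)
    (h : (powerMatrix P 1 ^ n) i j ≤ K ^ (1 : ℝ) * (powerMatrix Q 1 ^ m) k l) : c ≤ K := by
  rw [powerMatrix_one hP.1, powerMatrix_one hQ.1, Real.rpow_one] at h
  calc c ≤ (P ^ n) i j := hc
    _ ≤ K * (Q ^ m) k l := h
    _ ≤ K * 1 := mul_le_mul_of_nonneg_left ((hQ.pow m).apply_le_one k l) hK
    _ = K := mul_one K

variable [MeasurableSpace S] [DiscreteMeasurableSpace S] [MeasurableSpace S'] [DiscreteMeasurableSpace S']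
  {ppi : S → ℝ} {qpi : S' → ℝ} {μ : Measure (ℤ → S)} {ν : Measure (ℤ → S')}
  {D : Set (ℤ → S)} {E : Set (ℤ → S')} {φ : (ℤ → S) → (ℤ → S')} {ψ : (ℤ → S') → (ℤ → S)}

theorem betaFunction_le_of_isomorphism (hP : IsStochastic P) (hPprim : IsPrimitive P)
    (hppi : IsStationaryVector P ppi) (hμ : IsMarkovMeasure μ P ppi)
    (hQ : IsStochastic Q) (hQprim : IsPrimitive Q)
    (hqpi : IsStationaryVector Q qpi) (hν : IsMarkovMeasure ν Q qpi)
    (hφ : IsFactorMap μ ν D φ) (hψ : IsFactorMap ν μ E ψ)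
    (hφψ : ∀ x ∈ D, φ x ∈ E ∧ ψ (φ x) = x) (hψφ : ∀ y ∈ E, ψ y ∈ D ∧ φ (ψ y) = y)
    (hfinφ : ∫⁻ x, codeLength D φ x ∂μ < ⊤) (hfinψ : ∫⁻ y, codeLength E ψ y ∂ν < ⊤) (t : ℝ) :
    betaFunction P t ≤ betaFunction Q t := by
  have : IsProbabilityMeasure μ := hμ.isProbabilityMeasure hppi hφ.dom_full
  have : IsProbabilityMeasure ν := hν.isProbabilityMeasure hqpi hψ.dom_full
  have hD : μ Dᶜ = 0 := (prob_compl_eq_zero_iff hφ.dom_measurable).2 hφ.dom_full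
  have hE : ν Eᶜ = 0 := (prob_compl_eq_zero_iff hψ.dom_measurable).2 hψ.dom_full
  have hquarter : (0 : ℝ≥0∞) < 4⁻¹ := by simp
  obtain ⟨N, hNφ, hNψ⟩ :=
    ((hφ.eventually_measure_compl_controlledSet_lt hμ.map_shiftBy hfinφ hquarter).and
      (hψ.eventually_measure_compl_controlledSet_lt hν.map_shiftBy hfinψ hquarter)).exists
  obtain ⟨c, m, hc, hcm⟩ := hPprim.exists_uniform_lower_bound hP
  obtain ⟨c', m', hc', hcm'⟩ := hQprim.exists_uniform_lower_bound hQ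
  obtain ⟨δ, hδ, hδP⟩ := exists_pos_le_of_pos P
  obtain ⟨δ', hδ', hδQ⟩ := exists_pos_le_of_pos Q
  set L := δ' ^ (2 * N) * c' * δ ^ (2 * N) with hL
  have hL0 : 0 < L := by positivity
  refine betaFunction_le_of_pow_le hP hPprim
    (add_nonneg (Real.rpow_nonneg hc.le t) (Real.rpow_nonneg (inv_pos.2 hL0).le t)) (2 * N)
    (max m m') fun n hn => ?_
  have hshiftφ : μ (shiftBy (n : ℤ) ⁻¹' (controlledSet D φ N)ᶜ) < 4⁻¹ := by
    refine (Measure.le_map_apply (measurable_shiftBy _).aemeasurable _).trans_lt ?_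
    rwa [hμ.map_shiftBy]
  have hshiftψ : ν (shiftBy (n : ℤ) ⁻¹' (controlledSet E ψ N)ᶜ) < 4⁻¹ := by
    refine (Measure.le_map_apply (measurable_shiftBy _).aemeasurable _).trans_lt ?_
    rwa [hν.map_shiftBy]
  have hpull : ∀ s : Set (ℤ → S'), ν s < 4⁻¹ → μ (φ ⁻¹' s) < 4⁻¹ := fun s hs =>
    (Measure.le_map_apply hφ.measurable_map.aemeasurable _).trans_lt (by rwa [← hφ.pushforward])
  have hpull_ae : ∀ {p : (ℤ → S') → Prop}, (∀ᵐ y ∂ν, p y) → ∀ᵐ x ∂μ, p (φ x) := fun h =>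
    ae_of_ae_map hφ.measurable_map.aemeasurable (hφ.pushforward ▸ h)
  obtain ⟨x, ⟨hx, hy, hw, hw', hv, hv'⟩, hgood, hgood', hgoodψ, hgoodψ'⟩ :=
    exists_notMem_of_measure_lt_quarter hNφ hshiftφ (hpull _ hNψ) (hpull _ hshiftψ)
      ((ae_powerMatrix_pow_apply_le hP hQ hμ hν hφ hψ hD hE hφψ hψφ n N).and
        ((hpull_ae (ae_powerMatrix_pow_apply_le hQ hP hν hμ hψ hφ hE hD hψφ hφψ n N)).and
        ((hμ.ae_pathWeight_pos hP (show (0 : ℤ) ≤ n by omega)).and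
        ((hμ.ae_pathWeight_pos hP (show -(N : ℤ) ≤ n + N by omega)).and
        ((hpull_ae (hν.ae_pathWeight_pos hQ (show (0 : ℤ) ≤ n by omega))).and
          (hpull_ae (hν.ae_pathWeight_pos hQ (show -(N : ℤ) ≤ n + N by omega))))))))
  simp only [Set.mem_preimage, Set.notMem_compl_iff] at hgood hgood' hgoodψ hgoodψ'
  have hx := hx hgood hgood' hw hv'
  rw [(hφψ x hgood.1).2] at hy
  have hy := hy hgoodψ hgoodψ' hv hw'
  have hlow := le_ratio_of_pow_apply_le hP hQ (hcm n ((le_max_left _ _).trans hn) _ _)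
    (div_pos hw hv').le (hx 1)
  have hlow' := le_ratio_of_pow_apply_le hQ hP (hcm' n ((le_max_right _ _).trans hn) _ _)
    (div_pos hv hw').le (hy 1)
  have hup : pathWeight P 0 n x / pathWeight Q (-N) (n + N) (φ x) ≤ L⁻¹ := by
    rw [div_le_iff₀ hv', ← div_eq_inv_mul, le_div_iff₀ hL0, mul_comm]
    calc L * pathWeight P 0 n x
        = δ' ^ (2 * N) * (c' * (δ ^ (2 * N) * pathWeight P 0 n x)) := by rw [hL]; ring
      _ ≤ δ' ^ (2 * N) * (c' * pathWeight P (-N) (n + N) x) := by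
          gcongr
          exact pathWeight_window_lower_bound hP hδ hδP hw'
      _ ≤ δ' ^ (2 * N) * pathWeight Q 0 n (φ x) := by
          gcongr
          exact (le_div_iff₀ hw').1 hlow'
      _ ≤ pathWeight Q (-N) (n + N) (φ x) := pathWeight_window_lower_bound hQ hδ' hδQ hv'
  exact ⟨_, _, _, _, (hx t).trans (mul_le_mul_of_nonneg_right
    (rpow_le_rpow_add_rpow hc hlow hup t)
    (matrix_pow_nonneg (powerMatrix_nonneg Q t) _ _ _))⟩

end BetaFunction

/-- **Schmidt.** If the mixing Markov shifts of `P` and `Q` are finitarily isomorphic with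
finite expected code times, then `β_P(t) = β_Q(t)` for every `t ∈ ℝ`. -/
theorem beta_eq_of_fect
    {S₁ S₂ : Type*} [Fintype S₁] [DecidableEq S₁] [Fintype S₂] [DecidableEq S₂]
    [MeasurableSpace S₁] [DiscreteMeasurableSpace S₁]
    [MeasurableSpace S₂] [DiscreteMeasurableSpace S₂]
    (P : Matrix S₁ S₁ ℝ) (hPstoch : IsStochastic P) (hPprim : IsPrimitive P)
    (ppi₁ : S₁ → ℝ) (hppi₁ : IsStationaryVector P ppi₁)
    (μ : Measure (ℤ → S₁)) (hμ : IsMarkovMeasure μ P ppi₁)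
    (Q : Matrix S₂ S₂ ℝ) (hQstoch : IsStochastic Q) (hQprim : IsPrimitive Q)
    (ppi₂ : S₂ → ℝ) (hppi₂ : IsStationaryVector Q ppi₂)
    (ν : Measure (ℤ → S₂)) (hν : IsMarkovMeasure ν Q ppi₂)
    (hfect : FinitarilyIsomorphicFect μ ν) :
    ∀ t : ℝ, betaFunction P t = betaFunction Q t := by
  obtain ⟨D, E, φ, ψ, ⟨hφ, hψ, -, -, hφψ, hψφ⟩, hfinφ, hfinψ⟩ := hfect
  exact fun t => le_antisymm
    (betaFunction_le_of_isomorphism hPstoch hPprim hppi₁ hμ hQstoch hQprim hppi₂ hν hφ hψ hφψ hψφ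
      hfinφ hfinψ t)
    (betaFunction_le_of_isomorphism hQstoch hQprim hppi₂ hν hPstoch hPprim hppi₁ hμ hψ hφ hψφ hφψ
      hfinψ hfinφ t)
end
end

section
/- Let P be an irreducible aperiodic stochastic matrix on a finite state set. Then Δ_P is a subgroup of Γ_P and the quotient group Γ_P/Δ_P is cyclic. -/
open MeasureTheory ENNReal Filter

noncomputable section

/-- `w` is the strictly positive weight of some path of length `n` from `i` to `j` in `P`. -/
def IsPathWeight {S : Type*} (P : Matrix S S ℝ) (n : ℕ) (i j : S) (w : ℝ) : Prop :=
  ∃ c : ℕ → S, c 0 = i ∧ c n = j ∧ cycleWeight P n c = w ∧ 0 < w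

namespace IsPathWeight

variable {S : Type*} {P : Matrix S S ℝ}

theorem refl (i : S) : IsPathWeight P 0 i i 1 :=
  ⟨fun _ => i, rfl, rfl, by simp [cycleWeight], one_pos⟩

theorem single {i j : S} (h : 0 < P i j) : IsPathWeight P 1 i j (P i j) :=
  ⟨fun k => if k = 0 then i else j, by simp, by simp, by simp [cycleWeight], h⟩

theorem pos {n : ℕ} {i j : S} {w : ℝ} (h : IsPathWeight P n i j w) : 0 < w := by
  obtain ⟨_, _, _, _, hw⟩ := h
  exact hw

theorem trans {n m : ℕ} {i j k : S} {v w : ℝ} (hv : IsPathWeight P n i j v)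
    (hw : IsPathWeight P m j k w) : IsPathWeight P (n + m) i k (v * w) := by
  obtain ⟨c, hc0, hcn, rfl, hc⟩ := hv
  obtain ⟨d, hd0, hdm, rfl, hd⟩ := hw
  have hright : ∀ l, (if n + l ≤ n then c (n + l) else d (n + l - n)) = d l := by
    intro l
    rcases Nat.eq_zero_or_pos l with rfl | hl
    · simp [hcn, hd0]
    · rw [if_neg (by omega), Nat.add_sub_cancel_left]
  refine ⟨fun l => if l ≤ n then c l else d (l - n), by simpa using hc0,
    (hright m).trans hdm, ?_, mul_pos hc hd⟩
  simp only [cycleWeight, Finset.prod_range_add]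
  congr 1
  · refine Finset.prod_congr rfl fun l hl => ?_
    have hl := Finset.mem_range.1 hl
    rw [if_pos (by omega), if_pos (by omega)]
  · refine Finset.prod_congr rfl fun l _ => ?_
    rw [hright l, add_assoc, hright (l + 1)]

theorem pow {n : ℕ} {i : S} {w : ℝ} (h : IsPathWeight P n i i w) (k : ℕ) :
    IsPathWeight P (k * n) i i (w ^ k) := by
  induction k with
  | zero => simpa using refl i
  | succ k ih => simpa only [Nat.succ_mul, pow_succ] using ih.trans h

theorem exists_of_pow_pos [Fintype S] [DecidableEq S] (hP : ∀ i j, 0 ≤ P i j) {n : ℕ} {i j : S}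
    (h : 0 < (P ^ n) i j) : ∃ w, IsPathWeight P n i j w := by
  induction n generalizing j with
  | zero =>
    obtain rfl : i = j := by
      by_contra hij
      simp [Matrix.one_apply_ne hij] at h
    exact ⟨1, refl i⟩
  | succ n ih =>
    rw [pow_succ, Matrix.mul_apply] at h
    obtain ⟨k, -, hk⟩ := Finset.exists_lt_of_sum_lt (s := Finset.univ) (f := fun _ : S => (0 : ℝ))
      (by simpa using h)
    have hkj : 0 < P k j := (hP k j).lt_of_ne fun h0 => by simp [← h0] at hk
    obtain ⟨w, hw⟩ := ih (pos_of_mul_pos_left hk hkj.le)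
    exact ⟨_, hw.trans (single hkj)⟩

theorem mem_gammaGroup {n : ℕ} {i : S} {u : ℝˣ} (hn : 0 < n) (h : IsPathWeight P n i i u) :
    u ∈ GammaGroup P := by
  obtain ⟨c, hc0, hcn, hcw, hpos⟩ := h
  exact Subgroup.subset_closure ⟨n, c, hn, hcn.trans hc0.symm, hcw ▸ hpos, hcw.symm⟩

theorem div_mem_deltaGroup {n : ℕ} {i : S} {u v : ℝˣ} (hn : 0 < n)
    (hu : IsPathWeight P n i i u) (hv : IsPathWeight P n i i v) : u / v ∈ DeltaGroup P := by
  obtain ⟨c, hc0, hcn, hcw, hcpos⟩ := hu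
  obtain ⟨d, hd0, hdn, hdw, hdpos⟩ := hv
  exact Subgroup.subset_closure ⟨n, c, d, hn, hcn.trans hc0.symm, hdn.trans hd0.symm,
    hc0.trans hd0.symm, hcw ▸ hcpos, hdw ▸ hdpos, by rw [hcw, hdw, Units.val_div_eq_div_val]⟩

end IsPathWeight

theorem deltaGroup_le_gammaGroup {S : Type*} (P : Matrix S S ℝ) :
    DeltaGroup P ≤ GammaGroup P := by
  refine (Subgroup.closure_le _).2 ?_
  rintro u ⟨n, c, d, hn, hc, hd, -, hcw, hdw, hu⟩
  have hu' : u = Units.mk0 _ hcw.ne' / Units.mk0 _ hdw.ne' :=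
    Units.ext (by rw [hu, Units.val_div_eq_div_val, Units.val_mk0, Units.val_mk0])
  rw [hu']
  exact div_mem (IsPathWeight.mem_gammaGroup hn ⟨c, rfl, hc, rfl, hcw⟩)
    (IsPathWeight.mem_gammaGroup hn ⟨d, rfl, hd, rfl, hdw⟩)

/-- If every state is joined to `i` in both directions and `u`, `v` are weights of cycles through
`i` of lengths `N` and `N + 1`, then `v / u` generates `Γ_P` modulo `Δ_P`. -/
theorem gammaGroup_le_deltaGroup_sup_zpowers {S : Type*} {P : Matrix S S ℝ} {N : ℕ} {i : S}
    {u v : ℝˣ} (hto : ∀ j, ∃ n w, IsPathWeight P n i j w)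
    (hfrom : ∀ j, ∃ n w, IsPathWeight P n j i w)
    (hu : IsPathWeight P N i i u) (hv : IsPathWeight P (N + 1) i i v) :
    GammaGroup P ≤ DeltaGroup P ⊔ Subgroup.zpowers (v / u) := by
  refine (Subgroup.closure_le _).2 ?_
  rintro x ⟨n, c, hn, hc, hcw, hx⟩
  obtain ⟨a, p, hp⟩ := hto (c 0)
  obtain ⟨b, q, hq⟩ := hfrom (c 0)
  have hx' : IsPathWeight P n (c 0) (c 0) x := ⟨c, rfl, hc, hx.symm, hx ▸ hcw⟩
  have h₁ := ((hp.trans hx').trans hq).trans (hu.pow n)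
  have h₂ := (hp.trans hq).trans (hv.pow n)
  rw [show a + b + n * (N + 1) = a + n + b + n * N by ring] at h₂
  lift p to ℝˣ using hp.pos.ne'.isUnit
  lift q to ℝˣ using hq.pos.ne'.isUnit
  have hmem := IsPathWeight.div_mem_deltaGroup (u := p * x * q * u ^ n) (v := p * q * v ^ n)
    (show 0 < a + n + b + n * N by omega) (by simpa using h₁) (by simpa using h₂)
  have hfac : x = (p * x * q * u ^ n) / (p * q * v ^ n) * (v / u) ^ n := by
    rw [div_pow, div_mul_div_comm, eq_div_iff_mul_eq']
    simp only [mul_assoc, mul_comm, mul_left_comm]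
  rw [SetLike.mem_coe, hfac]
  exact Subgroup.mul_mem_sup hmem (Subgroup.npow_mem_zpowers _ n)

theorem isCyclic_quotient_subgroupOf_of_le_sup_zpowers {G : Type*} [CommGroup G]
    {H K : Subgroup G} {g : G} (hg : g ∈ K) (hK : K ≤ H ⊔ Subgroup.zpowers g) :
    IsCyclic (K ⧸ H.subgroupOf K) := by
  refine ⟨((⟨g, hg⟩ : K) : K ⧸ H.subgroupOf K), fun x => ?_⟩
  obtain ⟨⟨x, hx⟩, rfl⟩ := QuotientGroup.mk_surjective x
  obtain ⟨h, hh, _, ⟨k, rfl⟩, rfl⟩ := Subgroup.mem_sup.1 (hK hx)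
  refine ⟨k, ?_⟩
  change ((⟨g, hg⟩ ^ k : K) : K ⧸ H.subgroupOf K) = _
  rw [QuotientGroup.eq, Subgroup.mem_subgroupOf]
  simpa [mul_comm] using hh

theorem isCyclic_gammaGroup_quotient_of_isEmpty {S : Type*} [IsEmpty S] (P : Matrix S S ℝ) :
    IsCyclic (GammaGroup P ⧸ (DeltaGroup P).subgroupOf (GammaGroup P)) := by
  refine isCyclic_quotient_subgroupOf_of_le_sup_zpowers (one_mem _) ((Subgroup.closure_le _).2 ?_)
  rintro x ⟨_, c, -⟩
  exact isEmptyElim (c 0)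

theorem IsStochastic.pow_succ_pos {S : Type*} [Fintype S] [DecidableEq S] {P : Matrix S S ℝ}
    (hP : IsStochastic P) {n : ℕ} (hn : ∀ i j, 0 < (P ^ n) i j) (i j : S) :
    0 < (P ^ (n + 1)) i j := by
  rw [pow_succ', Matrix.mul_apply]
  have hsum : ∑ _k : S, (0 : ℝ) < ∑ k, P i k := by simp [hP.2 i]
  obtain ⟨k, -, hk⟩ := Finset.exists_lt_of_sum_lt hsum
  exact Finset.sum_pos' (fun l _ => mul_nonneg (hP.1 i l) (hn l j).le)
    ⟨k, Finset.mem_univ k, mul_pos hk (hn k j)⟩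

/-- **Parry–Schmidt.** For an irreducible aperiodic stochastic matrix `P`, the group
`Δ_P` is a subgroup of `Γ_P` and the quotient `Γ_P / Δ_P` is cyclic. -/
theorem delta_le_gamma_and_quotient_cyclic
    {S : Type*} [Fintype S] [DecidableEq S]
    (P : Matrix S S ℝ) (hPstoch : IsStochastic P) (hPprim : IsPrimitive P) :
    DeltaGroup (S := S) P ≤ GammaGroup P ∧
    IsCyclic ((GammaGroup P) ⧸ ((DeltaGroup (S := S) P).subgroupOf (GammaGroup P))) := by
  refine ⟨deltaGroup_le_gammaGroup P, ?_⟩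
  rcases isEmpty_or_nonempty S with _ | ⟨⟨i⟩⟩
  · exact isCyclic_gammaGroup_quotient_of_isEmpty P
  obtain ⟨n, hn⟩ := hPprim
  have hn₁ := hPstoch.pow_succ_pos hn
  have hpath (j k : S) := IsPathWeight.exists_of_pow_pos hPstoch.1 (hn₁ j k)
  obtain ⟨u, hu⟩ := hpath i i
  obtain ⟨v, hv⟩ := IsPathWeight.exists_of_pow_pos hPstoch.1 (hPstoch.pow_succ_pos hn₁ i i)
  lift u to ℝˣ using hu.pos.ne'.isUnit
  lift v to ℝˣ using hv.pos.ne'.isUnit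
  exact isCyclic_quotient_subgroupOf_of_le_sup_zpowers
    (div_mem (hv.mem_gammaGroup (Nat.succ_pos _)) (hu.mem_gammaGroup (Nat.succ_pos _)))
    (gammaGroup_le_deltaGroup_sup_zpowers (fun j => ⟨_, hpath i j⟩) (fun j => ⟨_, hpath j i⟩)
      hu hv)
end
end
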